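/- Let n ≥ 1 and let a₀, …, a_{n−1} ∈ ℝ³ be nonzero, pairwise linearly independent vectors defining a complexified-real central arrangement in ℂ³ with Milnor fiber F and basepoint z₀ ∈ F. Suppose there exists j < n such that every nonzero v ∈ ℂ³ with ℓⱼ(v) = 0 satisfies m_v = 2 or gcd(m_v, n) = 1 (vectors v with m_v = 1 automatically satisfy gcd(1, n) = 1, so the condition only constrains the multiple points of the line ker ℓⱼ). Then Ab π₁(F, z₀) is isomorphic to the free abelian group ℤ^{n−1}; in particular H₁(F;ℤ) is torsion-free of rank n−1. -/

import Mathlib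

/-!
Dehomogenising along the distinguished line `ker ℓ_j` turns the projective complement into the
complement `U` of `n - 1` complexified real affine lines in `ℂ²`, and the Milnor fiber becomes the
cyclic cover of `U` obtained by adjoining an `n`-th root of the product of the affine forms. Its
fundamental group is therefore the kernel `K` of the total degree `π₁ U → ℤ / n`.

Over a real point of the first coordinate the traces of the lines on the vertical line may collide;
over any other point shears carry the vertical line to the one over a fixed point `h * I` of the
imaginary axis. So `π₁ U` is generated by meridians `y_k` of the `n - 1` lines in that vertical
line, and these are independent in homology. Let `T` be the orbit of a distant base point under
multiplication by the unit circle, of degree `n - 1`, and let `D_k` be a loop running parallel to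
the line `k`. Then `D_k` commutes with `y_k` and with `T`. Its degree is `n - m_v`, where `v` is the
point at infinity of the line `k`, hence prime to `n` by hypothesis; when `m_v = 2` take `D_k = T`.
Modulo `[K, K]` any two elements of `K` commute; correcting `T` by a power of `D_k` and `y_k` by a
power of `T` to elements of `K` shows that `T` commutes with `y_k`, and then that all the `y_k`
commute. So `[K, K] = [π₁ U, π₁ U]`, and `H₁` of the Milnor fiber embeds in `H₁ U = ℤ^(n - 1)` with
finite index.
-/

open scoped unitInterval Topology

section Algebra

variable {G : Type*} [Group G] {ι : Type*}

theorem isMulCommutative_of_closure_eq_top {s : Set G} (hs : Subgroup.closure s = ⊤)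
    (hcomm : ∀ x ∈ s, ∀ y ∈ s, Commute x y) : IsMulCommutative G := by
  have := Subgroup.isMulCommutative_closure hcomm
  rw [hs] at this
  exact ⟨⟨fun x y =>
    congrArg Subtype.val (mul_comm' (⟨x, trivial⟩ : (⊤ : Subgroup G)) ⟨y, trivial⟩)⟩⟩

theorem isMulCommutative_of_mul_zpow_mem {y : ι → G} (hy : Subgroup.closure (Set.range y) = ⊤)
    (K : Subgroup G) (hK : ∀ g ∈ K, ∀ h ∈ K, Commute g h) {T : G}
    (hT : ∀ k, Commute (y k) T) (hyT : ∀ k, ∃ i : ℤ, y k * T ^ i ∈ K) : IsMulCommutative G := by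
  refine isMulCommutative_of_closure_eq_top hy ?_
  rintro _ ⟨k, rfl⟩ _ ⟨l, rfl⟩
  obtain ⟨i, hi⟩ := hyT k
  obtain ⟨j, hj⟩ := hyT l
  have hkl := hK _ hi _ hj
  have key : ∀ k, ∀ i j : ℤ, Commute (y k * T ^ i) (T ^ j) := fun k i j =>
    ((hT k).zpow_right j).mul_left ((Commute.refl T).zpow_zpow i j)
  have hk : y k = y k * T ^ i * T ^ (-i) := by rw [mul_assoc, ← zpow_add]; simp
  have hl : y l = y l * T ^ j * T ^ (-j) := by rw [mul_assoc, ← zpow_add]; simp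
  rw [hk, hl]
  exact (hkl.mul_right (key k i (-j))).mul_left
    ((key l j (-i)).symm.mul_right ((Commute.refl T).zpow_zpow _ _))

/-- The elements of `G` whose degree under `d` is divisible by `N`; for the fundamental group of
an arrangement complement and `d` the total winding number, this is the fundamental group of an
`N`-fold cyclic cover. -/
def degreeSubgroup (d : G →* Multiplicative ℤ) (N : ℤ) : Subgroup G :=
  (Subgroup.zpowers (Multiplicative.ofAdd N)).comap d

theorem mem_degreeSubgroup {d : G →* Multiplicative ℤ} {N : ℤ} {g : G} :
    g ∈ degreeSubgroup d N ↔ N ∣ (d g).toAdd := by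
  simp only [degreeSubgroup, Subgroup.mem_comap, Subgroup.mem_zpowers_iff,
    dvd_iff_exists_eq_mul_left]
  exact exists_congr fun i => eq_comm.trans Multiplicative.toAdd.apply_eq_iff_eq.symm

instance degreeSubgroup_normal (d : G →* Multiplicative ℤ) (N : ℤ) :
    (degreeSubgroup d N).Normal :=
  Subgroup.Normal.comap inferInstance d

theorem degreeSubgroup_finiteIndex (d : G →* Multiplicative ℤ) {N : ℤ} (hN : N ≠ 0) :
    (degreeSubgroup d N).FiniteIndex := by
  have hindex : (degreeSubgroup d N).index ∣ N.natAbs := by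
    rw [degreeSubgroup, Subgroup.index_comap]
    exact (Subgroup.relIndex_dvd_index_of_normal _ _).trans (Int.index_zmultiples N).dvd
  exact ⟨ne_zero_of_dvd_ne_zero (Int.natAbs_ne_zero.2 hN) hindex⟩

/-- Modulo the commutators of `K = degreeSubgroup d N`, each `y k` commutes with `T`: some
`κ = T * D k ^ p` lies in `K`, hence commutes with the image of `y k * T ^ i ∈ K`, and so does
`D k`. -/
theorem commutator_degreeSubgroup_eq {y : ι → G} (hy : Subgroup.closure (Set.range y) = ⊤)
    (d : G →* Multiplicative ℤ) (N : ℤ) {T : G} (hT : N ∣ (d T).toAdd + 1)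
    (hD : ∀ k, ∃ D, Commute D (y k) ∧ Commute D T ∧ IsCoprime (d D).toAdd N) :
    ⁅degreeSubgroup d N, degreeSubgroup d N⁆ = commutator G := by
  set K := degreeSubgroup d N
  refine le_antisymm (Subgroup.commutator_mono le_top le_top) ?_
  rw [← Subgroup.Normal.quotient_commutative_iff_commutator_le]
  let π := QuotientGroup.mk' ⁅K, K⁆
  have hπK : ∀ g ∈ K, ∀ h ∈ K, Commute (π g) (π h) := fun g hg h hh => by
    rw [← commutatorElement_eq_one_iff_commute, ← map_commutatorElement]
    exact (QuotientGroup.eq_one_iff _).2 (Subgroup.commutator_mem_commutator hg hh)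
  have hyT : ∀ k, y k * T ^ (d (y k)).toAdd ∈ K := fun k => by
    rw [mem_degreeSubgroup, map_mul, map_zpow, toAdd_mul, toAdd_zpow, smul_eq_mul]
    exact (hT.mul_left (d (y k)).toAdd).trans (dvd_of_eq (by ring))
  have hπT : ∀ k, Commute (π (y k)) (π T) := fun k => by
    obtain ⟨D, hDy, hDT, p, q, hpq⟩ := hD k
    have hκ : T * D ^ p ∈ K := by
      rw [mem_degreeSubgroup, map_mul, map_zpow, toAdd_mul, toAdd_zpow, smul_eq_mul]
      exact (hT.sub (dvd_mul_left N q)).trans (dvd_of_eq (by linear_combination -hpq))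
    have hDe : Commute (y k * T ^ (d (y k)).toAdd) (D ^ (-p)) :=
      ((hDy.mul_right (hDT.zpow_right _)).zpow_left _).symm
    have he := (hπK _ (hyT k) _ hκ).mul_right (hDe.map π)
    rw [← map_mul, mul_assoc, ← zpow_add, add_neg_cancel, zpow_zero, mul_one] at he
    simpa [mul_assoc] using he.mul_left ((Commute.refl (π T)).zpow_left (-(d (y k)).toAdd))
  refine isMulCommutative_of_mul_zpow_mem (y := fun k => π (y k)) ?_ (K.map π) ?_ hπT fun k =>
    ⟨(d (y k)).toAdd, y k * T ^ (d (y k)).toAdd, hyT k, by rw [map_mul, map_zpow]⟩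
  · rw [Set.range_comp' π y, ← MonoidHom.map_closure, hy,
      Subgroup.map_top_of_surjective _ (QuotientGroup.mk'_surjective _)]
  · rintro _ ⟨g, hg, rfl⟩ _ ⟨h, hh, rfl⟩
    exact hπK g hg h hh

theorem abelianization_map_subtype_injective {K : Subgroup G} (hK : ⁅K, K⁆ = commutator G) :
    Function.Injective (Abelianization.map K.subtype) := by
  rw [injective_iff_map_eq_one]
  intro x
  obtain ⟨g, rfl⟩ := QuotientGroup.mk_surjective x
  intro hg
  have hg' : K.subtype g ∈ ⁅K, K⁆ := by
    rwa [hK, ← Abelianization.ker_of]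
  rw [← Subgroup.map_subtype_commutator,
    Subgroup.mem_map_iff_mem K.subtype_injective] at hg'
  exact (QuotientGroup.eq_one_iff g).2 hg'

/-- Generators of a group on which some family of homomorphisms to `ℤ` is independent form a
basis of the abelianization. -/
noncomputable def abelianizationBasis {y : ι → G} (hy : Subgroup.closure (Set.range y) = ⊤)
    {w : ι → G →* Multiplicative ℤ} (hw : LinearIndependent ℤ fun k l => (w l (y k)).toAdd) :
    Module.Basis ι ℤ (Additive (Abelianization G)) :=
  let W : Additive (Abelianization G) →+ (ι → ℤ) := AddMonoidHom.pi fun l =>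
    MonoidHom.toAdditiveLeft (Abelianization.lift (w l))
  .mk (v := fun k => Additive.ofMul (Abelianization.of (y k)))
    (.of_comp W.toIntLinearMap hw) <| by
    intro x _
    obtain ⟨g, rfl⟩ := QuotientGroup.mk_surjective x
    have hg : g ∈ Subgroup.closure (Set.range y) := hy ▸ Subgroup.mem_top g
    induction hg using Subgroup.closure_induction with
    | mem _ h => exact Submodule.subset_span (h.imp fun _ hk => congrArg Abelianization.of hk)
    | one => exact Submodule.zero_mem _
    | mul _ _ _ _ h₁ h₂ => exact Submodule.add_mem _ (h₁ trivial) (h₂ trivial)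
    | inv _ _ h => exact Submodule.neg_mem _ (h trivial)

theorem nonempty_abelianization_degreeSubgroup_addEquiv [Fintype ι] {y : ι → G}
    (hy : Subgroup.closure (Set.range y) = ⊤)
    {w : ι → G →* Multiplicative ℤ} (hw : LinearIndependent ℤ fun k l => (w l (y k)).toAdd)
    (d : G →* Multiplicative ℤ) {N : ℤ} (hN : N ≠ 0) {T : G} (hT : N ∣ (d T).toAdd + 1)
    (hD : ∀ k, ∃ D, Commute D (y k) ∧ Commute D T ∧ IsCoprime (d D).toAdd N) {r : ℕ}
    (hr : Fintype.card ι = r) :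
    Nonempty (Additive (Abelianization (degreeSubgroup d N)) ≃+ (Fin r → ℤ)) := by
  let K := degreeSubgroup d N
  let b := abelianizationBasis hy hw
  have := Module.Finite.of_basis b
  have := Module.Free.of_basis b
  let f := MonoidHom.toAdditive (Abelianization.map K.subtype)
  have hf : Function.Injective f :=
    abelianization_map_subtype_injective (commutator_degreeSubgroup_eq hy d N hT hD)
  have : f.range.FiniteIndex := by
    have hK := (degreeSubgroup_finiteIndex d hN).index_ne_zero
    have hrange : f.range = (K.map Abelianization.of).toAddSubgroup := by
      ext x
      constructor
      · rintro ⟨x, rfl⟩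
        obtain ⟨g, rfl⟩ := QuotientGroup.mk_surjective x
        exact ⟨g, g.2, rfl⟩
      · rintro ⟨g, hg, rfl⟩
        exact ⟨Additive.ofMul (Abelianization.of ⟨g, hg⟩), rfl⟩
    rw [hrange]
    exact ⟨ne_zero_of_dvd_ne_zero hK
      (K.index_map_dvd (f := Abelianization.of) QuotientGroup.mk_surjective)⟩
  have hrank : Module.finrank ℤ f.range.toIntSubmodule = r :=
    f.range.finrank_eq_of_finiteIndex.trans ((Module.finrank_eq_card_basis b).trans hr)
  let c := Module.finBasisOfFinrankEq ℤ f.range.toIntSubmodule hrank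
  exact ⟨(AddMonoidHom.ofInjective hf).trans c.equivFun.toAddEquiv⟩

end Algebra

section WindingNumber

/-- The punctured complex plane `ℂ \ {0}`. -/
abbrev PuncturedPlane : Type := {z : ℂ // z ≠ 0}

variable {X : Type*} [TopologicalSpace X] {x y z : X} (f : C(X, PuncturedPlane))

theorem exists_continuous_log (γ : Path x y) :
    ∃ L : C(I, ℂ), ∀ t, Complex.exp (L t) = f (γ t) := by
  have h₀ : f.comp γ.toContinuousMap 0 =
      (⟨_, Complex.exp_ne_zero (Complex.log (f x))⟩ : PuncturedPlane) :=
    Subtype.ext (by simp [Complex.exp_log (f x).2])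
  exact ⟨Complex.isCoveringMap_exp.liftPath _ _ h₀, fun t =>
    congrArg Subtype.val (congrFun (Complex.isCoveringMap_exp.liftPath_lifts _ _ h₀) t)⟩

theorem sub_eq_sub_of_homotopic {γ₁ γ₂ : Path x y} (h : γ₁.Homotopic γ₂) {L M : C(I, ℂ)}
    (hL : ∀ t, Complex.exp (L t) = f (γ₁ t)) (hM : ∀ t, Complex.exp (M t) = f (γ₂ t)) :
    L 1 - L 0 = M 1 - M 0 := by
  let M' : C(I, ℂ) := ⟨fun t => M t - M 0 + L 0, by fun_prop⟩
  have hM' : ∀ t, Complex.exp (M' t) = f (γ₂ t) := fun t => by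
    have h₀ : Complex.exp (M 0) = Complex.exp (L 0) := by rw [hM, hL, γ₁.source, γ₂.source]
    rw [← hM, ContinuousMap.coe_mk, Complex.exp_add, ← h₀, ← Complex.exp_add, sub_add_cancel]
  have cov := Complex.isCoveringMap_exp
  have h₁ : f.comp γ₁.toContinuousMap 0 = (⟨_, Complex.exp_ne_zero (L 0)⟩ : PuncturedPlane) :=
    Subtype.ext (hL 0).symm
  have h₂ : f.comp γ₂.toContinuousMap 0 = (⟨_, Complex.exp_ne_zero (L 0)⟩ : PuncturedPlane) :=
    Subtype.ext (by simp [hL])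
  have eL : L = cov.liftPath _ _ h₁ :=
    (cov.eq_liftPath_iff' h₁).2 ⟨funext fun t => Subtype.ext (hL t), rfl⟩
  have eM : M' = cov.liftPath _ _ h₂ :=
    (cov.eq_liftPath_iff' h₂).2 ⟨funext fun t => Subtype.ext (hM' t), by simp [M']⟩
  have hend : L 1 = M' 1 := by
    rw [eL, eM]
    exact cov.liftPath_apply_one_eq_of_homotopicRel (h.map f) (L 0) h₁ h₂
  rw [hend, ContinuousMap.coe_mk, add_sub_cancel_right]

/-- The increment of a continuous logarithm of `f` along a homotopy class of paths. -/
noncomputable def logIncrement (γ : Path.Homotopic.Quotient x y) : ℂ :=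
  Quotient.lift (fun γ : Path x y =>
      (exists_continuous_log f γ).choose 1 - (exists_continuous_log f γ).choose 0)
    (fun γ₁ γ₂ h => sub_eq_sub_of_homotopic f h (exists_continuous_log f γ₁).choose_spec
      (exists_continuous_log f γ₂).choose_spec) γ

variable {f}

theorem logIncrement_mk {γ : Path x y} {L : C(I, ℂ)} (hL : ∀ t, Complex.exp (L t) = f (γ t)) :
    logIncrement f (.mk γ) = L 1 - L 0 :=
  sub_eq_sub_of_homotopic f (.refl γ) (exists_continuous_log f γ).choose_spec hL

variable (f)

theorem logIncrement_trans (γ₁ : Path.Homotopic.Quotient x y) (γ₂ : Path.Homotopic.Quotient y z) :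
    logIncrement f (γ₁.trans γ₂) = logIncrement f γ₁ + logIncrement f γ₂ := by
  obtain ⟨γ₁, rfl⟩ := γ₁.mk_surjective
  obtain ⟨γ₂, rfl⟩ := γ₂.mk_surjective
  obtain ⟨L, hL⟩ := exists_continuous_log f γ₁
  obtain ⟨M, hM⟩ := exists_continuous_log f γ₂
  let L' : Path (L 0) (L 1) := ⟨L, rfl, rfl⟩
  let M' : Path (L 1) (M 1 - M 0 + L 1) := ⟨⟨fun t => M t - M 0 + L 1, by fun_prop⟩, by simp, rfl⟩
  have hM' : ∀ t, Complex.exp (M' t) = f (γ₂ t) := fun t => by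
    have h₀ : Complex.exp (M 0) = Complex.exp (L 1) := by rw [hM, hL, γ₁.target, γ₂.source]
    change Complex.exp (M t - M 0 + L 1) = _
    rw [← hM, Complex.exp_add, ← h₀, ← Complex.exp_add, sub_add_cancel]
  have hLM : ∀ t, Complex.exp ((L'.trans M').toContinuousMap t) = f (γ₁.trans γ₂ t) := fun t => by
    change Complex.exp (L'.trans M' t) = _
    simp only [Path.trans_apply]
    split_ifs
    exacts [hL _, hM' _]
  rw [← Path.Homotopic.Quotient.mk_trans, logIncrement_mk hLM, logIncrement_mk hL,
    logIncrement_mk hM]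
  change (L'.trans M') 1 - (L'.trans M') 0 = _
  rw [Path.target, Path.source]
  ring

theorem logIncrement_symm (γ : Path.Homotopic.Quotient x y) :
    logIncrement f γ.symm = -logIncrement f γ := by
  have h_refl : logIncrement f (.mk (Path.refl x)) = 0 := by
    have h := logIncrement_trans f (.mk (Path.refl x)) (.mk (Path.refl x))
    simpa using h
  have h := logIncrement_trans f γ γ.symm
  rw [Path.Homotopic.Quotient.trans_symm] at h
  exact eq_neg_of_add_eq_zero_right (h.symm.trans h_refl)

theorem exists_int_logIncrement_eq (γ : FundamentalGroup X x) :
    ∃ k : ℤ, logIncrement f γ = k * (2 * Real.pi * Complex.I) := by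
  obtain ⟨γ, rfl⟩ := Path.Homotopic.Quotient.mk_surjective γ
  obtain ⟨L, hL⟩ := exists_continuous_log f γ
  have h : Complex.exp (L 1) = Complex.exp (L 0) := by rw [hL, hL, γ.target, γ.source]
  obtain ⟨k, hk⟩ := Complex.exp_eq_exp_iff_exists_int.1 h
  exact ⟨k, by rw [logIncrement_mk hL, hk]; ring⟩

theorem int_mul_two_pi_I_inj {k l : ℤ} :
    (k * (2 * Real.pi * Complex.I) : ℂ) = l * (2 * Real.pi * Complex.I) ↔ k = l := by
  rw [mul_left_inj' Complex.two_pi_I_ne_zero, Int.cast_inj]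

/-- The winding number around `0` of the image of a loop under `f`. -/
noncomputable def windingNumber (x : X) : FundamentalGroup X x →* Multiplicative ℤ :=
  MonoidHom.mk' (fun γ => Multiplicative.ofAdd (exists_int_logIncrement_eq f γ).choose) <| by
    intro γ₁ γ₂
    rw [← ofAdd_add, Multiplicative.ofAdd.apply_eq_iff_eq, ← int_mul_two_pi_I_inj,
      ← (exists_int_logIncrement_eq f (γ₁ * γ₂)).choose_spec, Int.cast_add, add_mul,
      ← (exists_int_logIncrement_eq f γ₁).choose_spec,
      ← (exists_int_logIncrement_eq f γ₂).choose_spec, add_comm]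
    exact logIncrement_trans f _ _

variable {f}

theorem windingNumber_eq_iff {γ : FundamentalGroup X x} {k : ℤ} :
    (windingNumber f x γ).toAdd = k ↔ logIncrement f γ = k * (2 * Real.pi * Complex.I) := by
  rw [(exists_int_logIncrement_eq f γ).choose_spec, int_mul_two_pi_I_inj]
  rfl

theorem windingNumber_mk_eq {γ : Path x x} {k : ℤ} {L : C(I, ℂ)}
    (hL : ∀ t, Complex.exp (L t) = f (γ t)) (hk : L 1 - L 0 = k * (2 * Real.pi * Complex.I)) :
    (windingNumber f x (.mk γ)).toAdd = k :=
  windingNumber_eq_iff.2 ((logIncrement_mk hL).trans hk)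

variable (f)

theorem exists_log_windingNumber (γ : Path x x) :
    ∃ L : C(I, ℂ), (∀ t, Complex.exp (L t) = f (γ t)) ∧
      L 1 - L 0 = (windingNumber f x (.mk γ)).toAdd * (2 * Real.pi * Complex.I) :=
  (exists_continuous_log f γ).imp fun _ hL =>
    ⟨hL, (logIncrement_mk hL).symm.trans (windingNumber_eq_iff.1 rfl)⟩

theorem windingNumber_mulEquivOfPath (γ : Path x y) (g : FundamentalGroup X x) :
    windingNumber f y (FundamentalGroup.fundamentalGroupMulEquivOfPath γ g) =
      windingNumber f x g := by
  refine Multiplicative.toAdd.injective (windingNumber_eq_iff.2 ?_)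
  have h : logIncrement f (FundamentalGroup.fundamentalGroupMulEquivOfPath γ g) =
      logIncrement f ((Path.Homotopic.Quotient.mk γ).symm.trans
        (Path.Homotopic.Quotient.trans g (.mk γ))) := rfl
  rw [h, logIncrement_trans, logIncrement_trans, logIncrement_symm, add_comm,
    add_neg_cancel_right]
  exact windingNumber_eq_iff.1 rfl

theorem windingNumber_const_mul_prod {κ : Type*} [Fintype κ] {f : κ → C(X, PuncturedPlane)}
    {F : C(X, PuncturedPlane)} {c : ℂ} (hc : c ≠ 0) (hF : ∀ x, (F x : ℂ) = c * ∏ k, (f k x : ℂ)) :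
    windingNumber F x = ∏ k, windingNumber (f k) x := by
  ext γ
  obtain ⟨γ, rfl⟩ := Path.Homotopic.Quotient.mk_surjective γ
  choose L hL hL' using fun k => exists_log_windingNumber (f k) γ
  have hsum : ∀ t, Complex.exp (Complex.log c + ∑ k, L k t) = F (γ t) := fun t => by
    simp only [Complex.exp_add, Complex.exp_log hc, Complex.exp_sum, hF, hL]
  let Λ : C(I, ℂ) := ⟨fun t => Complex.log c + ∑ k, L k t, by fun_prop⟩
  rw [MonoidHom.finsetProd_apply, toAdd_prod]
  refine windingNumber_mk_eq (L := Λ) hsum ?_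
  simp only [Λ, ContinuousMap.coe_mk, add_sub_add_left_eq_sub, ← Finset.sum_sub_distrib, hL',
    ← Finset.sum_mul]
  push_cast
  rfl

section Circle

variable {γ : Path x x} {c ρ : ℂ}
  (hγ : ∀ t : I, (f (γ t) : ℂ) = c + ρ * Complex.exp (2 * Real.pi * Complex.I * (t : ℝ)))
include hγ

theorem windingNumber_circle_of_norm_lt (h : ‖c‖ < ‖ρ‖) :
    (windingNumber f x (.mk γ)).toAdd = 1 := by
  have hρ : ρ ≠ 0 := norm_pos_iff.1 ((norm_nonneg c).trans_lt h)
  have hslit : ∀ t : I, 1 + c / ρ * Complex.exp (-(2 * Real.pi * Complex.I * (t : ℝ)))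
      ∈ Complex.slitPlane := fun t => Complex.mem_slitPlane_of_norm_lt_one <| by
    rw [norm_mul, norm_div, Complex.norm_exp]
    simpa using (div_lt_one (norm_pos_iff.2 hρ)).2 h
  let L : C(I, ℂ) := ⟨fun t => Complex.log ρ + 2 * Real.pi * Complex.I * (t : ℝ) +
    Complex.log (1 + c / ρ * Complex.exp (-(2 * Real.pi * Complex.I * (t : ℝ)))),
    .add (by fun_prop) (.clog (by fun_prop) hslit)⟩
  refine windingNumber_mk_eq (L := L) (fun t => ?_) ?_
  · have := Complex.exp_ne_zero (2 * Real.pi * Complex.I * (t : ℝ))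
    simp only [L, ContinuousMap.coe_mk, Complex.exp_add, Complex.exp_log hρ, hγ,
      Complex.exp_log (Complex.slitPlane_ne_zero (hslit t))]
    rw [Complex.exp_neg]
    field_simp
    ring
  · simp [L, Complex.exp_neg]

theorem windingNumber_circle_of_lt_norm (h : ‖ρ‖ < ‖c‖) :
    (windingNumber f x (.mk γ)).toAdd = 0 := by
  have hc : c ≠ 0 := norm_pos_iff.1 ((norm_nonneg ρ).trans_lt h)
  have hslit : ∀ t : I, 1 + ρ / c * Complex.exp (2 * Real.pi * Complex.I * (t : ℝ))
      ∈ Complex.slitPlane := fun t => Complex.mem_slitPlane_of_norm_lt_one <| by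
    rw [norm_mul, norm_div, Complex.norm_exp]
    simpa using (div_lt_one (norm_pos_iff.2 hc)).2 h
  let L : C(I, ℂ) := ⟨fun t => Complex.log c +
    Complex.log (1 + ρ / c * Complex.exp (2 * Real.pi * Complex.I * (t : ℝ))),
    .add (by fun_prop) (.clog (by fun_prop) hslit)⟩
  refine windingNumber_mk_eq (L := L) (fun t => ?_) ?_
  · simp only [L, ContinuousMap.coe_mk, Complex.exp_add, Complex.exp_log hc, hγ,
      Complex.exp_log (Complex.slitPlane_ne_zero (hslit t))]
    field_simp
  · simp [L]

end Circle

end WindingNumber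

section CyclicCover

theorem isCoveringMap_pullback_fst {E B U : Type*} [TopologicalSpace E] [TopologicalSpace B]
    [TopologicalSpace U] {p : E → B} (hp : IsCoveringMap p) {f : U → B} (hf : Continuous f) :
    IsCoveringMap (Function.Pullback.fst : Function.Pullback f p → U) := by
  intro u
  obtain ⟨hI, V, huV, hV, -, H, hH⟩ := hp (f u)
  have hfst : Continuous (Function.Pullback.fst : Function.Pullback f p → U) := by
    unfold Function.Pullback.fst; fun_prop
  suffices h : IsEvenlyCovered Function.Pullback.fst u (p ⁻¹' {f u}) from
    h.to_isEvenlyCovered_preimage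
  refine ⟨hI, f ⁻¹' V, huV, hV.preimage hf, (hV.preimage hf).preimage hfst, ?_, ?_⟩
  · have hmem (e : Function.Pullback.fst (f := f) (g := p) ⁻¹' (f ⁻¹' V)) : p e.1.1.2 ∈ V :=
      e.1.2 ▸ e.2
    refine
      { toFun e := (⟨e.1.1.1, e.2⟩, (H ⟨e.1.1.2, hmem e⟩).2)
        invFun c := ⟨⟨(c.1, H.symm (⟨f c.1, c.1.2⟩, c.2)), by simp [← hH]⟩, c.1.2⟩
        left_inv e := ?_
        right_inv c := by simp
        continuous_toFun := ?_
        continuous_invFun := by fun_prop }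
    · have h : H ⟨e.1.1.2, hmem e⟩ = (⟨f e.1.1.1, e.2⟩, (H ⟨e.1.1.2, hmem e⟩).2) :=
        Prod.ext (Subtype.ext ((hH _).trans e.1.2.symm)) rfl
      ext
      · rfl
      · simp [← h]
    · fun_prop
  · intro e; rfl

variable {U : Type*} [TopologicalSpace U]

/-- The cyclic cover of `U` that adjoins an `n`-th root of the function `f`. -/
abbrev CyclicCover (f : C(U, PuncturedPlane)) (n : ℕ) : Type _ :=
  Function.Pullback f fun ζ : PuncturedPlane =>
    (⟨(ζ : ℂ) ^ n, pow_ne_zero n ζ.2⟩ : PuncturedPlane)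

/-- The projection of the cyclic cover. -/
noncomputable def cyclicCoverProj (f : C(U, PuncturedPlane)) (n : ℕ) : C(CyclicCover f n, U) :=
  ⟨Function.Pullback.fst, by unfold Function.Pullback.fst; fun_prop⟩

variable (f : C(U, PuncturedPlane)) {n : ℕ}

theorem cyclicCover_map_injective (hn : n ≠ 0) (e : CyclicCover f n) :
    Function.Injective (FundamentalGroup.map (cyclicCoverProj f n) e) :=
  (isCoveringMap_pullback_fst (isCoveringMap_npow n (by exact_mod_cast hn))
    f.continuous).injective_path_homotopic_map e e

theorem windingNumber_comp_cyclicCoverProj (e : CyclicCover f n) (γ : FundamentalGroup _ e) :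
    (n : ℤ) ∣ (windingNumber f _ (FundamentalGroup.map (cyclicCoverProj f n) e γ)).toAdd := by
  obtain ⟨γ, rfl⟩ := Path.Homotopic.Quotient.mk_surjective γ
  let root : C(CyclicCover f n, PuncturedPlane) :=
    ⟨Function.Pullback.snd, by unfold Function.Pullback.snd; fun_prop⟩
  obtain ⟨L, hL, hL'⟩ := exists_log_windingNumber root γ
  refine ⟨(windingNumber root e (.mk γ)).toAdd, windingNumber_mk_eq (L := n • L) (fun t => ?_) ?_⟩
  · rw [ContinuousMap.smul_apply, nsmul_eq_mul, Complex.exp_nat_mul, hL]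
    exact (congrArg Subtype.val (γ t).2).symm
  · rw [ContinuousMap.smul_apply, ContinuousMap.smul_apply, ← smul_sub, hL', nsmul_eq_mul]
    push_cast
    ring

theorem mem_range_cyclicCover_map (hn : n ≠ 0) (e : CyclicCover f n)
    {γ : FundamentalGroup U (cyclicCoverProj f n e)} (hγ : (n : ℤ) ∣ (windingNumber f _ γ).toAdd) :
    γ ∈ (FundamentalGroup.map (cyclicCoverProj f n) e).range := by
  obtain ⟨k, hk⟩ := hγ
  obtain ⟨γ, rfl⟩ := Path.Homotopic.Quotient.mk_surjective γ
  obtain ⟨L, hL, hL'⟩ := exists_log_windingNumber f γ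
  have hnC : (n : ℂ) ≠ 0 := Nat.cast_ne_zero.2 hn
  let root (t : I) : PuncturedPlane := ⟨e.snd * Complex.exp ((L t - L 0) / n),
    mul_ne_zero e.snd.2 (Complex.exp_ne_zero _)⟩
  have root_pow (t : I) : f (γ t) = (root t : ℂ) ^ n := by
    have he : (e.snd : ℂ) ^ n = f (γ 0) := by
      rw [γ.source]; exact (congrArg Subtype.val e.2).symm
    simp only [root, mul_pow, he, ← Complex.exp_nat_mul, mul_div_cancel₀ _ hnC, Complex.exp_sub, hL,
      mul_div_cancel₀ _ (f (γ 0)).2]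
  have root_zero : root 0 = e.snd := Subtype.ext (by simp [root])
  have root_one : root 1 = e.snd := Subtype.ext <| by
    have h : (L 1 - L 0) / n = k * (2 * Real.pi * Complex.I) := by
      rw [hL', hk]; push_cast; field_simp
    simp only [root, h, Complex.exp_int_mul_two_pi_mul_I, mul_one]
  let lift : Path e e :=
    { toFun t := ⟨(γ t, root t), Subtype.ext (root_pow t)⟩
      continuous_toFun := by fun_prop
      source' := Subtype.ext (Prod.ext γ.source root_zero)
      target' := Subtype.ext (Prod.ext γ.target root_one) }
  exact ⟨Path.Homotopic.Quotient.mk lift, rfl⟩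

theorem cyclicCover_map_range (hn : n ≠ 0) (e : CyclicCover f n) :
    (FundamentalGroup.map (cyclicCoverProj f n) e).range =
      degreeSubgroup (windingNumber f (cyclicCoverProj f n e)) n := by
  ext γ
  rw [mem_degreeSubgroup]
  refine ⟨?_, mem_range_cyclicCover_map f hn e⟩
  rintro ⟨γ, rfl⟩
  exact windingNumber_comp_cyclicCoverProj f e γ

/-- The fundamental group of the cyclic cover. -/
noncomputable def fundamentalGroupCyclicCoverEquiv (hn : n ≠ 0) (e : CyclicCover f n) :
    FundamentalGroup (CyclicCover f n) e ≃*
      degreeSubgroup (windingNumber f (cyclicCoverProj f n e)) n :=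
  (MonoidHom.ofInjective (cyclicCover_map_injective f hn e)).trans
    (MulEquiv.subgroupCongr (cyclicCover_map_range f hn e))

/-- A path from the base point identifies the groups of loops of degree divisible by `N`. -/
noncomputable def degreeSubgroupEquivOfPath {x y : U} (γ : Path x y) (N : ℤ) :
    degreeSubgroup (windingNumber f x) N ≃* degreeSubgroup (windingNumber f y) N :=
  ((FundamentalGroup.fundamentalGroupMulEquivOfPath γ).subgroupMap _).trans <|
    MulEquiv.subgroupCongr <| by
      ext g
      obtain ⟨g, rfl⟩ := (FundamentalGroup.fundamentalGroupMulEquivOfPath γ).surjective g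
      refine Subgroup.mem_map_equiv.trans ?_
      rw [MulEquiv.symm_apply_apply, mem_degreeSubgroup, mem_degreeSubgroup,
        windingNumber_mulEquivOfPath]

end CyclicCover

section Homotopy

open CategoryTheory

variable {X : Type*} [TopologicalSpace X]

/-- The homotopy classes of paths from `x` to `y`, as morphisms of the fundamental groupoid;
`PathClass x x` is the fundamental group. -/
abbrev PathClass (x y : X) : Type _ :=
  FundamentalGroupoid.mk x ⟶ FundamentalGroupoid.mk y

/-- The homotopy class of a path. -/
def pathClass {x y : X} (γ : Path x y) : PathClass x y :=
  Path.Homotopic.Quotient.mk γ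

theorem pathClass_surjective {x y : X} : Function.Surjective (pathClass (x := x) (y := y)) :=
  Path.Homotopic.Quotient.mk_surjective

theorem pathClass_eq_iff {x y : X} {γ δ : Path x y} :
    pathClass γ = pathClass δ ↔ γ.Homotopic δ :=
  Path.Homotopic.Quotient.eq

theorem pathClass_refl (x : X) : pathClass (Path.refl x) = 𝟙 (FundamentalGroupoid.mk x) :=
  rfl

theorem pathClass_trans {x y z : X} (γ : Path x y) (δ : Path y z) :
    pathClass (γ.trans δ) = pathClass γ ≫ pathClass δ :=
  rfl

theorem pathClass_symm {x y : X} (γ : Path x y) : pathClass γ.symm = inv (pathClass γ) := by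
  rw [← Groupoid.inv_eq_inv]; rfl

theorem forall_trans_apply_mem {x y z : X} {γ : Path x y} {δ : Path y z} {V : Set X}
    (hγ : ∀ t, γ t ∈ V) (hδ : ∀ t, δ t ∈ V) (t : I) : γ.trans δ t ∈ V := by
  have h : Set.range (γ.trans δ) ⊆ V := by
    rw [Path.trans_range, Set.union_subset_iff, Set.range_subset_iff, Set.range_subset_iff]
    exact ⟨hγ, hδ⟩
  exact h (Set.mem_range_self t)

theorem pathClass_comp_eq_of_square {a b c d : X} (Γ : C(I × I, X)) {bottom : Path a b}
    {right : Path b d} {left : Path a c} {top : Path c d} (h_bottom : ∀ t, bottom t = Γ (0, t))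
    (h_right : ∀ s, right s = Γ (s, 1)) (h_left : ∀ s, left s = Γ (s, 0))
    (h_top : ∀ t, top t = Γ (1, t)) :
    pathClass bottom ≫ pathClass right = pathClass left ≫ pathClass top := by
  let f (s : I) : C(I, X) := ⟨fun t => Γ (s, t), by fun_prop⟩
  let G : ContinuousMap.Homotopy (f 0) (f 1) :=
    { toContinuousMap := Γ
      map_zero_left _ := rfl
      map_one_left _ := rfl }
  let diagonal : Path (0 : I) 1 := ⟨.id I, rfl, rfl⟩
  obtain rfl : f 0 0 = a := by rw [← bottom.source, h_bottom]; rfl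
  obtain rfl : f 0 1 = b := by rw [← bottom.target, h_bottom]; rfl
  obtain rfl : f 1 0 = c := by rw [← left.target, h_left]; rfl
  obtain rfl : f 1 1 = d := by rw [← right.target, h_right]; rfl
  obtain rfl : bottom = diagonal.map (map_continuous (f 0)) := Path.ext (funext h_bottom)
  obtain rfl : right = G.evalAt 1 := Path.ext (funext h_right)
  obtain rfl : left = G.evalAt 0 := Path.ext (funext h_left)
  obtain rfl : top = diagonal.map (map_continuous (f 1)) := Path.ext (funext h_top)
  exact pathClass_eq_iff.2 (Path.Homotopic.map_trans_evalAt G diagonal)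

theorem commute_pathClass_of_torus {x : X} (Γ : C(I × I, X)) {γ δ : Path x x}
    (hγ : ∀ t, γ t = Γ (0, t) ∧ γ t = Γ (1, t)) (hδ : ∀ s, δ s = Γ (s, 0) ∧ δ s = Γ (s, 1)) :
    Commute (S := FundamentalGroup X x) (pathClass γ) (pathClass δ) :=
  (pathClass_comp_eq_of_square Γ (fun t => (hγ t).1) (fun s => (hδ s).2) (fun s => (hδ s).1)
    fun t => (hγ t).2).symm

theorem exists_subpath_partition {x y : X} (γ : Path x y) {U : X → Set X} (hU : ∀ z, IsOpen (U z))
    (hzU : ∀ z, z ∈ U z) : ∃ t : ℕ → I, t 0 = 0 ∧ (∃ n, t n = 1) ∧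
      ∀ n, ∃ z, ∀ s, γ.subpath (t n) (t (n + 1)) s ∈ U z := by
  obtain ⟨t, ht_zero, ht_mono, ⟨n, hn⟩, ht⟩ := exists_monotone_Icc_subset_open_cover_unitInterval
    (fun z => (hU z).preimage γ.continuous) (fun s _ => Set.mem_iUnion.2 ⟨γ s, hzU _⟩)
  refine ⟨t, ht_zero, ⟨n, hn n le_rfl⟩, fun n => (ht n).imp fun z hz s => ?_⟩
  obtain ⟨r, hr, hrs⟩ :=
    (γ.range_subpath_of_le _ _ (ht_mono n.le_succ)).subset (Set.mem_range_self s)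
  exact hrs ▸ hz hr

section Generation

variable [LocallyPathConnectedSpace X] {b : X} {D : Set X}

theorem exists_path_mem_of_mem_nhds {x : X} {V : Set X} (hV : V ∈ 𝓝 x) (hD : Dense D) :
    ∃ d ∈ D, ∃ γ : Path x d, ∀ t, γ t ∈ V := by
  obtain ⟨W, ⟨hW, hW_conn⟩, hWV⟩ := (path_connected_basis x).mem_iff.1 hV
  obtain ⟨d, hdD, hdW⟩ := hD.inter_nhds_nonempty hW
  have h := hW_conn.joinedIn x (mem_of_mem_nhds hW) d hdW
  exact ⟨d, hdD, h.somePath, fun t => hWV (h.somePath_mem t)⟩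

theorem loop_mem_of_forall_local (hD : Dense D) (p : ∀ x ∈ D, PathClass b x)
    (H : Subgroup (FundamentalGroup X b))
    (hH : ∀ x, ∃ U, IsOpen U ∧ x ∈ U ∧ ∀ y hy y' hy', ∀ δ : Path y y', (∀ t, δ t ∈ U) →
      p y hy ≫ pathClass δ ≫ inv (p y' hy') ∈ H)
    {x : X} (hx : x ∈ D) (γ : Path x x) : p x hx ≫ pathClass γ ≫ inv (p x hx) ∈ H := by
  choose U hU hxU hUH using hH
  -- Paths ending outside `D` are closed up through nearby points of `D`.
  let Good {y : X} (c : PathClass x y) : Prop :=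
    ∃ V ∈ 𝓝 y, ∀ d hd, ∀ ε : Path y d, (∀ t, ε t ∈ V) →
      p x hx ≫ (c ≫ pathClass ε) ≫ inv (p d hd) ∈ H
  have good_refl : Good (pathClass (.refl x)) := ⟨U x, (hU x).mem_nhds (hxU x), fun d hd ε hε => by
    simpa only [pathClass_refl, Category.id_comp] using hUH x x hx d hd ε hε⟩
  have good_comp {y z w : X} {c : PathClass x y} (hc : Good c) (δ : Path y z)
      (hδ : ∀ t, δ t ∈ U w) : Good (c ≫ pathClass δ) := by
    obtain ⟨V, hV, hVH⟩ := hc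
    obtain ⟨e, he, ε, hε⟩ := exists_path_mem_of_mem_nhds
      (Filter.inter_mem hV ((hU w).mem_nhds (δ.source ▸ hδ 0))) hD
    refine ⟨U w, (hU w).mem_nhds (δ.target ▸ hδ 1), fun d hd η hη => ?_⟩
    have h_mem := forall_trans_apply_mem (forall_trans_apply_mem (γ := ε.symm)
      (fun t => (hε _).2) hδ) hη
    have h := H.mul_mem (hUH w e he d hd _ h_mem) (hVH e he ε fun t => (hε t).1)
    simpa [End.mul_def, pathClass_trans, pathClass_symm] using h
  obtain ⟨t, ht_zero, ⟨n, hn⟩, ht⟩ := exists_subpath_partition γ hU hxU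
  have good_subpath (n : ℕ) : ∀ y (hy : y = γ (t n)),
      Good (pathClass ((γ.subpath 0 (t n)).cast γ.source.symm hy)) := by
    induction n with
    | zero =>
      rw [ht_zero]
      intro y hy
      obtain rfl : x = y := γ.source.symm.trans hy.symm
      convert good_refl using 2
      ext s
      simp
    | succ n ih =>
      rintro y rfl
      obtain ⟨z, hz⟩ := ht n
      convert good_comp (ih _ rfl) _ hz using 1
      exact pathClass_eq_iff.2 (.symm ⟨(Path.Homotopy.subpathTransSubpath γ _ _ _).pathCast _ _⟩)
  obtain ⟨V, hV, h⟩ := good_subpath n x (by rw [hn, γ.target])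
  have h_mem := h x hx (.refl x) fun _ => mem_of_mem_nhds hV
  rw [pathClass_refl, Category.comp_id] at h_mem
  convert h_mem using 5
  ext s
  simp [hn, Path.subpath]

theorem subgroup_eq_top_of_forall_local (hD : Dense D) (p : ∀ x ∈ D, PathClass b x)
    (H : Subgroup (FundamentalGroup X b))
    (hH : ∀ x, ∃ U, IsOpen U ∧ x ∈ U ∧ ∀ y hy y' hy', ∀ δ : Path y y', (∀ t, δ t ∈ U) →
      p y hy ≫ pathClass δ ≫ inv (p y' hy') ∈ H) : H = ⊤ := by
  have : Nonempty X := ⟨b⟩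
  obtain ⟨x, hx⟩ := hD.nonempty
  refine (Subgroup.eq_top_iff' H).2 fun g => ?_
  obtain ⟨γ, hγ⟩ := pathClass_surjective (inv (p x hx) ≫ g ≫ p x hx)
  simpa [hγ] using loop_mem_of_forall_local hD p H hH hx γ

end Generation

section StraightLine

variable {E : Type*} [AddCommGroup E] [Module ℝ E] [TopologicalSpace E] [IsTopologicalAddGroup E]
  [ContinuousSMul ℝ E] {S C : Set E}

/-- The straight path in `S` between the ends of a segment contained in `S`. -/
def segmentPath {x y : S} (h : segment ℝ (x : E) y ⊆ S) : Path x y where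
  toFun t := ⟨AffineMap.lineMap (x : E) y (t : ℝ), h (segment_eq_image_lineMap ℝ (x : E) y ▸
    Set.mem_image_of_mem _ t.2)⟩
  continuous_toFun := by
    simp only [AffineMap.lineMap_apply_module]
    fun_prop
  source' := by simp
  target' := by simp

theorem coe_segmentPath {x y : S} (h : segment ℝ (x : E) y ⊆ S) (t : I) :
    (segmentPath h t : E) = AffineMap.lineMap (x : E) y (t : ℝ) :=
  rfl

theorem pathClass_comp_segmentPath {x y x' y' : S} (γ : Path x y) (δ : Path x' y')
    (h : ∀ t, segment ℝ (γ t : E) (δ t) ⊆ S) (hx : segment ℝ (x : E) x' ⊆ S)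
    (hy : segment ℝ (y : E) y' ⊆ S) :
    pathClass γ ≫ pathClass (segmentPath hy) = pathClass (segmentPath hx) ≫ pathClass δ := by
  let Γ : C(I × I, S) :=
    ⟨fun q => ⟨AffineMap.lineMap (γ q.2 : E) (δ q.2) (q.1 : ℝ), h q.2
      (segment_eq_image_lineMap ℝ (γ q.2 : E) (δ q.2) ▸ Set.mem_image_of_mem _ q.1.2)⟩, by
      simp only [AffineMap.lineMap_apply_module]
      fun_prop⟩
  refine pathClass_comp_eq_of_square Γ (fun t => ?_) (fun s => ?_) (fun s => ?_) fun t => ?_ <;>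
    ext <;> simp [Γ, coe_segmentPath]

theorem pathClass_segmentPath_self {x : S} (h : segment ℝ (x : E) x ⊆ S) :
    pathClass (segmentPath h) = 𝟙 (FundamentalGroupoid.mk x) := by
  rw [← pathClass_refl]
  congr 1
  ext t
  simp [coe_segmentPath]

theorem pathClass_eq_of_convex (hC : Convex ℝ C) (hCS : C ⊆ S) {x y : S} {γ δ : Path x y}
    (hγ : ∀ t, (γ t : E) ∈ C) (hδ : ∀ t, (δ t : E) ∈ C) : pathClass γ = pathClass δ := by
  have h (z : S) : segment ℝ (z : E) z ⊆ S := by simp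
  simpa only [pathClass_segmentPath_self, Category.comp_id, Category.id_comp] using
    pathClass_comp_segmentPath γ δ (fun t => (hC.segment_subset (hγ t) (hδ t)).trans hCS)
      (h x) (h y)

theorem segmentPath_mem (hC : Convex ℝ C) {x y : S} (hx : (x : E) ∈ C) (hy : (y : E) ∈ C)
    (h : segment ℝ (x : E) y ⊆ S) (t : I) : (segmentPath h t : E) ∈ C :=
  hC.segment_subset hx hy (segment_eq_image_lineMap ℝ (x : E) y ▸ Set.mem_image_of_mem _ t.2)

theorem pathClass_segmentPath_comp (hC : Convex ℝ C) (hCS : C ⊆ S) {x y z : S} (hx : (x : E) ∈ C)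
    (hy : (y : E) ∈ C) (hz : (z : E) ∈ C) (hxy : segment ℝ (x : E) y ⊆ S)
    (hyz : segment ℝ (y : E) z ⊆ S) (hxz : segment ℝ (x : E) z ⊆ S) :
    pathClass (segmentPath hxy) ≫ pathClass (segmentPath hyz) = pathClass (segmentPath hxz) := by
  rw [← pathClass_trans]
  exact pathClass_eq_of_convex hC hCS (forall_trans_apply_mem (V := Subtype.val ⁻¹' C)
    (segmentPath_mem hC hx hy hxy) (segmentPath_mem hC hy hz hyz)) (segmentPath_mem hC hx hz hxz)

end StraightLine

end Homotopy

section PuncturedPlane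

open CategoryTheory

variable {ι : Type*} {a : ι → ℂ}

/-- The points `z` lying, for every `l`, on the positive side of the line through `a l` with normal
vector `(u l, v l)`. -/
def sideCell (a : ι → ℂ) (u v : ι → ℝ) : Set ℂ :=
  {z | ∀ l, 0 < u l * (z.re - (a l).re) + v l * (z.im - (a l).im)}

theorem convex_sideCell (u v : ι → ℝ) : Convex ℝ (sideCell a u v) := by
  intro x hx y hy r s hr hs hrs l
  obtain rfl : s = 1 - r := by linarith
  have h : 0 < r * _ + (1 - r) * _ := convex_Ioi (0 : ℝ) (hx l) (hy l) hr hs hrs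
  convert h using 1
  simp only [Complex.add_re, Complex.add_im, Complex.smul_re, Complex.smul_im, smul_eq_mul]
  ring

theorem sideCell_subset_compl (u v : ι → ℝ) : sideCell a u v ⊆ (Set.range a)ᶜ := by
  rintro z hz ⟨l, rfl⟩
  simpa using hz l

theorem isOpen_sideCell [Finite ι] (u v : ι → ℝ) : IsOpen (sideCell a u v) := by
  simp only [sideCell, Set.ofPred_forall]
  exact isOpen_iInter_of_finite fun l => isOpen_lt (by fun_prop) (by fun_prop)

theorem segment_subset_compl_of_mem_sideCell {u v : ι → ℝ} {x y : ℂ} (hx : x ∈ sideCell a u v)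
    (hy : y ∈ sideCell a u v) : segment ℝ x y ⊆ (Set.range a)ᶜ :=
  ((convex_sideCell u v).segment_subset hx hy).trans (sideCell_subset_compl u v)

/-- For every puncture `a k` of the plane, a circle centred on the horizontal line through `a k`
which meets this line at abscissae `left` and `right k`, and which encloses precisely the punctures
of this line up to `a k`. -/
structure RowCircles (a : ι → ℂ) where
  left : ℝ
  right : ι → ℝ
  left_lt (k : ι) : left < (a k).re
  lt_right (k : ι) : (a k).re < right k
  right_lt (k l : ι) : (a k).im = (a l).im → (a k).re < (a l).re → right k < (a l).re
  diameter_lt (k l : ι) : (a k).im ≠ (a l).im → right k - left < 2 * |(a k).im - (a l).im|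

namespace RowCircles

variable (c : RowCircles a)

theorem mem_sideCell_west (s : ℝ) : (⟨c.left, s⟩ : ℂ) ∈ sideCell a (-1) 0 := fun l => by
  simpa using c.left_lt l

/-- The point at height `s` on the vertical line carrying the leftmost points of the circles. -/
def west (s : ℝ) : ((Set.range a)ᶜ : Set ℂ) :=
  ⟨⟨c.left, s⟩, sideCell_subset_compl _ _ (c.mem_sideCell_west s)⟩

theorem east_not_mem_range (k : ι) : (⟨c.right k, (a k).im⟩ : ℂ) ∈ (Set.range a)ᶜ := by
  rintro ⟨l, hl⟩
  obtain ⟨h_re, h_im⟩ := Complex.ext_iff.1 hl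
  rcases le_or_gt (a l).re (a k).re with h | h
  · exact absurd (c.lt_right k) (by simp_all)
  · exact absurd (c.right_lt k l h_im.symm h) (by simp [h_re])

/-- The rightmost point of the circle of `a k`. -/
def east (k : ι) : ((Set.range a)ᶜ : Set ℂ) :=
  ⟨⟨c.right k, (a k).im⟩, c.east_not_mem_range k⟩

theorem segment_west_subset (s t : ℝ) :
    segment ℝ (c.west s : ℂ) (c.west t) ⊆ (Set.range a)ᶜ :=
  segment_subset_compl_of_mem_sideCell (c.mem_sideCell_west s) (c.mem_sideCell_west t)

/-- The point at angle `θ` on the circle of `a k`, measured from its leftmost point. -/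
noncomputable def circlePoint (k : ι) (θ : ℝ) : ℂ :=
  (⟨(c.left + c.right k) / 2, (a k).im⟩ : ℂ) -
    ((c.right k - c.left) / 2 : ℝ) * Complex.exp (θ * Complex.I)

theorem circlePoint_re (k : ι) (θ : ℝ) : (c.circlePoint k θ).re =
    (c.left + c.right k) / 2 - (c.right k - c.left) / 2 * Real.cos θ := by
  rw [circlePoint, Complex.sub_re, Complex.re_ofReal_mul, Complex.exp_ofReal_mul_I_re]

theorem circlePoint_im (k : ι) (θ : ℝ) :
    (c.circlePoint k θ).im = (a k).im - (c.right k - c.left) / 2 * Real.sin θ := by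
  rw [circlePoint, Complex.sub_im, Complex.im_ofReal_mul, Complex.exp_ofReal_mul_I_im]

theorem continuous_circlePoint (k : ι) : Continuous (c.circlePoint k) := by
  unfold circlePoint
  fun_prop

theorem sub_circlePoint_im_pos (k l : ι) (θ : ℝ) (h : (a l).im ≠ (a k).im) :
    0 < ((a k).im - (a l).im) * ((c.circlePoint k θ).im - (a l).im) := by
  have h_diam := c.diameter_lt k l h.symm
  have h_pos : c.left < c.right k := (c.left_lt k).trans (c.lt_right k)
  have h_sin := Real.neg_one_le_sin θ
  have h_sin' := Real.sin_le_one θ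
  rw [c.circlePoint_im]
  rcases h.lt_or_gt with h | h
  · rw [abs_of_pos (by linarith)] at h_diam
    exact mul_pos (by linarith) (by nlinarith)
  · rw [abs_of_neg (by linarith)] at h_diam
    exact mul_pos_of_neg_of_neg (by linarith) (by nlinarith)

theorem circlePoint_not_mem_range (k : ι) (θ : ℝ) : c.circlePoint k θ ∈ (Set.range a)ᶜ := by
  rintro ⟨l, hl⟩
  rcases ne_or_eq (a l).im (a k).im with h | h
  · simpa [← hl] using c.sub_circlePoint_im_pos k l θ h
  obtain ⟨h_re, h_im⟩ := Complex.ext_iff.1 hl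
  have h_pos : c.left < c.right k := (c.left_lt k).trans (c.lt_right k)
  have h_sin : Real.sin θ = 0 := by
    have : (c.right k - c.left) / 2 * Real.sin θ = 0 := by rw [c.circlePoint_im] at h_im; linarith
    exact (mul_eq_zero.1 this).resolve_left (by linarith)
  rcases Real.sin_eq_zero_iff_cos_eq.1 h_sin with h_cos | h_cos <;>
    rw [c.circlePoint_re, h_cos] at h_re
  · exact (c.left_lt l).ne' (by linarith)
  · exact c.east_not_mem_range k ⟨l, Complex.ext (by linarith) h⟩

theorem circlePoint_zero (k : ι) : c.circlePoint k 0 = c.west (a k).im := by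
  apply Complex.ext
  · rw [c.circlePoint_re, Real.cos_zero, west]
    ring
  · rw [c.circlePoint_im, Real.sin_zero, west]
    ring

theorem circlePoint_pi (k : ι) : c.circlePoint k Real.pi = c.east k := by
  apply Complex.ext
  · rw [c.circlePoint_re, Real.cos_pi, east]
    ring
  · rw [c.circlePoint_im, Real.sin_pi, east]
    ring

theorem circlePoint_add_two_pi (k : ι) (θ : ℝ) :
    c.circlePoint k (θ + 2 * Real.pi) = c.circlePoint k θ := by
  apply Complex.ext
  · rw [c.circlePoint_re, c.circlePoint_re, Real.cos_add_two_pi]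
  · rw [c.circlePoint_im, c.circlePoint_im, Real.sin_add_two_pi]

theorem circlePoint_mul_pi (k : ι) {ε : ℝ} (hε : |ε| = 1) :
    c.circlePoint k (ε * Real.pi) = c.east k := by
  rw [← c.circlePoint_pi]
  rcases eq_or_eq_neg_of_abs_eq hε with rfl | rfl
  · rw [one_mul]
  · rw [← c.circlePoint_add_two_pi]
    ring_nf

/-- The half circle from the leftmost to the rightmost point of the circle of `a k` that passes
below `a k` for `ε = 1` and above for `ε = -1`. -/
noncomputable def arc (k : ι) {ε : ℝ} (hε : |ε| = 1) : Path (c.west (a k).im) (c.east k) where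
  toFun t := ⟨c.circlePoint k (ε * Real.pi * t), c.circlePoint_not_mem_range k _⟩
  continuous_toFun := by
    have := c.continuous_circlePoint k
    fun_prop
  source' := by simp [circlePoint_zero]
  target' := by simp [circlePoint_mul_pi, hε]

/-- The circle of `a k`, as a loop based at its leftmost point. -/
noncomputable def circle (k : ι) : Path (c.west (a k).im) (c.west (a k).im) where
  toFun t := ⟨c.circlePoint k (2 * Real.pi * t), c.circlePoint_not_mem_range k _⟩
  continuous_toFun := by
    have := c.continuous_circlePoint k
    fun_prop
  source' := by simp [circlePoint_zero]
  target' := by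
    have := c.circlePoint_add_two_pi k 0
    simp_all [circlePoint_zero]

theorem pathClass_circle (k : ι) : pathClass (c.circle k) =
    pathClass (c.arc k (ε := 1) (by simp)) ≫ inv (pathClass (c.arc k (ε := -1) (by simp))) := by
  rw [← pathClass_symm, ← pathClass_trans]
  congr 1
  ext t
  rw [Path.trans_apply]
  split_ifs with h
  · simp only [circle, arc, Path.coe_mk_mk]
    congr 1
    ring
  · change c.circlePoint k (2 * Real.pi * t) = c.circlePoint k (-1 * Real.pi * (1 - (2 * t - 1)))
    rw [← c.circlePoint_add_two_pi k (-1 * _ * _)]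
    congr 1
    ring

/-- The loop that runs from `west 0` along the vertical line to the circle of `a k`, once around
this circle, and back. -/
noncomputable def meridian (k : ι) : FundamentalGroup ((Set.range a)ᶜ : Set ℂ) (c.west 0) :=
  pathClass (segmentPath (c.segment_west_subset 0 (a k).im)) ≫ pathClass (c.circle k) ≫
    inv (pathClass (segmentPath (c.segment_west_subset 0 (a k).im)))

/-- The path that runs from `west 0` along the vertical line to the circle of `a k` and then along
half of this circle. -/
noncomputable def halfMeridian (k : ι) {ε : ℝ} (hε : |ε| = 1) : PathClass (c.west 0) (c.east k) :=
  pathClass (segmentPath (c.segment_west_subset 0 (a k).im)) ≫ pathClass (c.arc k hε)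

theorem halfMeridian_comp_inv_mem_closure (k : ι) {ε ε' : ℝ} (hε : |ε| = 1) (hε' : |ε'| = 1) :
    c.halfMeridian k hε ≫ inv (c.halfMeridian k hε') ∈
      Subgroup.closure (Set.range c.meridian) := by
  have h_one : (1 : FundamentalGroup _ (c.west 0)) ∈ Subgroup.closure (Set.range c.meridian) :=
    one_mem _
  have h_meridian : c.meridian k ∈ Subgroup.closure (Set.range c.meridian) :=
    Subgroup.subset_closure (Set.mem_range_self k)
  have h_inv : inv (c.meridian k) ∈ Subgroup.closure (Set.range c.meridian) := by
    rw [← Groupoid.inv_eq_inv]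
    exact inv_mem h_meridian
  rcases eq_or_eq_neg_of_abs_eq hε with rfl | rfl <;>
    rcases eq_or_eq_neg_of_abs_eq hε' with rfl | rfl
  · simpa using h_one
  · simpa [meridian, pathClass_circle, halfMeridian] using h_meridian
  · simpa [meridian, pathClass_circle, halfMeridian] using h_inv
  · simpa using h_one

/-- The complement of the horizontal lines through the punctures. -/
def offRows (a : ι → ℂ) : Set ((Set.range a)ᶜ : Set ℂ) :=
  {z | ∀ l, (a l).im ≠ (z : ℂ).im}

theorem mem_sideCell_of_im_eq {z w : ℂ} (hz : ∀ l, (a l).im ≠ z.im) (hw : w.im = z.im) :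
    w ∈ sideCell a 0 fun l => z.im - (a l).im := fun l => by
  simpa [hw] using mul_self_pos.2 (sub_ne_zero.2 (hz l).symm)

theorem segment_west_self_subset {z : ((Set.range a)ᶜ : Set ℂ)} (hz : z ∈ offRows a) :
    segment ℝ (c.west (z : ℂ).im : ℂ) z ⊆ (Set.range a)ᶜ :=
  segment_subset_compl_of_mem_sideCell (mem_sideCell_of_im_eq hz rfl) (mem_sideCell_of_im_eq hz rfl)

/-- The class of the path that runs from `west 0` to `z` vertically and then horizontally. -/
noncomputable def approach (z : ((Set.range a)ᶜ : Set ℂ)) (hz : z ∈ offRows a) :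
    PathClass (c.west 0) z :=
  pathClass (segmentPath (c.segment_west_subset 0 (z : ℂ).im)) ≫
    pathClass (segmentPath (c.segment_west_self_subset hz))

theorem circlePoint_mem_sideCell {y : ℝ} {k : ι} {θ : ℝ}
    (hky : 0 < ((a k).im - y) * Real.sin θ)
    (hly : ∀ l, (a l).im ≠ (a k).im → 0 < ((a k).im - (a l).im) * (y - (a l).im)) :
    c.circlePoint k θ ∈ sideCell a 0 fun l => y - (a l).im := by
  intro l
  rw [Pi.zero_apply, zero_mul, zero_add]
  change 0 < (y - (a l).im) * _
  rcases ne_or_eq (a l).im (a k).im with hl | hl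
  · have h := hly l hl
    have h' := c.sub_circlePoint_im_pos k l θ hl
    rw [mul_pos_iff] at h h' ⊢
    grind
  · have h_pos : c.left < c.right k := (c.left_lt k).trans (c.lt_right k)
    have := mul_pos (half_pos (sub_pos.2 h_pos)) hky
    rw [c.circlePoint_im, hl]
    linarith

-- The horizontal path to `y` sweeps out a rectangle with the half circle below or above `a k`.
theorem approach_comp_eq {y : ((Set.range a)ᶜ : Set ℂ)} (hy : y ∈ offRows a) (k : ι) {ε : ℝ}
    (hε : |ε| = 1) (hky : 0 < ε * ((a k).im - (y : ℂ).im))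
    (hly : ∀ l, (a l).im ≠ (a k).im → 0 < ((a k).im - (a l).im) * ((y : ℂ).im - (a l).im))
    (h : segment ℝ (y : ℂ) (c.east k) ⊆ (Set.range a)ᶜ) :
    c.approach y hy ≫ pathClass (segmentPath h) = c.halfMeridian k hε := by
  have h_segment (t : I) : segment ℝ
      (segmentPath (c.segment_west_self_subset hy) t : ℂ) (c.arc k hε t) ⊆ (Set.range a)ᶜ := by
    rcases eq_or_ne t 0 with rfl | h_zero
    · simpa using c.segment_west_subset _ _
    rcases eq_or_ne t 1 with rfl | h_one
    · simpa using h
    have h_sin : 0 < Real.sin (Real.pi * t) := Real.sin_pos_of_pos_of_lt_pi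
      (mul_pos Real.pi_pos (unitInterval.pos_iff_ne_zero.2 h_zero))
      (mul_lt_of_lt_one_right Real.pi_pos (unitInterval.lt_one_iff_ne_one.2 h_one))
    have h_side : 0 < ((a k).im - (y : ℂ).im) * Real.sin (ε * Real.pi * t) := by
      have h_pos := mul_pos hky h_sin
      rcases eq_or_eq_neg_of_abs_eq hε with rfl | rfl
      · simpa only [one_mul] using h_pos
      · rw [neg_one_mul, neg_mul, Real.sin_neg]
        linarith
    have h_west := mem_sideCell_of_im_eq (w := c.west (y : ℂ).im) hy rfl
    exact segment_subset_compl_of_mem_sideCell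
      (segmentPath_mem (convex_sideCell _ _) h_west (mem_sideCell_of_im_eq hy rfl) _ t)
      (c.circlePoint_mem_sideCell h_side hly)
  rw [approach, Category.assoc, pathClass_comp_segmentPath _ (c.arc k hε) h_segment
      (c.segment_west_subset _ _) h, ← Category.assoc,
    pathClass_segmentPath_comp (convex_sideCell (-1) 0) (sideCell_subset_compl _ _)
      (c.mem_sideCell_west _) (c.mem_sideCell_west _) (c.mem_sideCell_west _)]
  rfl

theorem approach_comp_path_eq {y y' : ((Set.range a)ᶜ : Set ℂ)} (hy : y ∈ offRows a)
    (hy' : y' ∈ offRows a) {u v : ι → ℝ} (hw : (c.west (y : ℂ).im : ℂ) ∈ sideCell a u v)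
    (hw' : (c.west (y' : ℂ).im : ℂ) ∈ sideCell a u v) {δ : Path y y'}
    (hδ : ∀ t, (δ t : ℂ) ∈ sideCell a u v) :
    c.approach y hy ≫ pathClass δ = c.approach y' hy' := by
  have hyC : (y : ℂ) ∈ sideCell a u v := by simpa using hδ 0
  have hyC' : (y' : ℂ) ∈ sideCell a u v := by simpa using hδ 1
  have h_square : pathClass (segmentPath (c.segment_west_self_subset hy)) ≫ pathClass δ =
      pathClass (segmentPath (c.segment_west_subset _ _)) ≫
        pathClass (segmentPath (c.segment_west_self_subset hy')) := by
    rw [← pathClass_trans, ← pathClass_trans]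
    let V : Set ((Set.range a)ᶜ : Set ℂ) := Subtype.val ⁻¹' sideCell a u v
    have hC : Convex ℝ (sideCell a u v) := convex_sideCell u v
    exact pathClass_eq_of_convex hC (sideCell_subset_compl u v)
      (forall_trans_apply_mem (V := V) (segmentPath_mem hC hw hyC _) hδ)
      (forall_trans_apply_mem (V := V) (segmentPath_mem hC hw hw' _)
        (segmentPath_mem hC hw' hyC' _))
  rw [approach, Category.assoc, h_square, ← Category.assoc,
    pathClass_segmentPath_comp (convex_sideCell (-1) 0) (sideCell_subset_compl _ _)
      (c.mem_sideCell_west _) (c.mem_sideCell_west _) (c.mem_sideCell_west _)]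
  rfl

/-- A convex neighbourhood of `x`: the points separated from `x` neither by a horizontal line
through a puncture nor, when the puncture is at the height of `x`, by a vertical one. -/
noncomputable def cell (x : ((Set.range a)ᶜ : Set ℂ)) : Set ℂ :=
  sideCell a (fun l => if (a l).im = (x : ℂ).im then (x : ℂ).re - (a l).re else 0)
    fun l => (x : ℂ).im - (a l).im

theorem mem_cell_self (x : ((Set.range a)ᶜ : Set ℂ)) : (x : ℂ) ∈ cell x := by
  intro l
  dsimp only
  split_ifs with h
  · have h_re : (x : ℂ).re - (a l).re ≠ 0 := fun h_re =>
      x.2 ⟨l, Complex.ext (sub_eq_zero.1 h_re).symm h⟩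
    simpa [h] using mul_self_pos.2 h_re
  · simpa using mul_self_pos.2 (sub_ne_zero.2 (Ne.symm h))

theorem east_mem_cell {x : ((Set.range a)ᶜ : Set ℂ)} {k : ι} (hk : (a k).im = (x : ℂ).im)
    (hk_lt : (a k).re < (x : ℂ).re)
    (hk_max : ∀ l, (a l).im = (x : ℂ).im → (a l).re < (x : ℂ).re → (a l).re ≤ (a k).re) :
    (c.east k : ℂ) ∈ cell x := by
  intro l
  have h := mem_cell_self x l
  dsimp only [east] at h ⊢
  rw [hk]
  split_ifs at h ⊢ with hl
  · have h_right := c.right_lt k l (hk.trans hl.symm)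
    have h_left := c.lt_right k
    have h_max := hk_max l hl
    rcases lt_or_ge (a l).re (x : ℂ).re with h_lt | h_ge
    · have := mul_pos (sub_pos.2 h_lt) (sub_pos.2 (h_left.trans_le' (h_max h_lt)))
      simpa [hl] using this
    · have h_ne : (x : ℂ).re < (a l).re := by
        refine h_ge.lt_of_ne fun h_eq => ?_
        simp [h_eq, hl] at h
      have := mul_pos_of_neg_of_neg (sub_neg.2 h_ne) (sub_neg.2 (h_right (hk_lt.trans h_ne)))
      simpa [hl] using this
  · simpa using h

theorem exists_approach_comp_eq_halfMeridian {x y : ((Set.range a)ᶜ : Set ℂ)}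
    (hy : y ∈ offRows a) (hyx : (y : ℂ) ∈ cell x) {k : ι} (hk : (a k).im = (x : ℂ).im)
    (h : segment ℝ (y : ℂ) (c.east k) ⊆ (Set.range a)ᶜ) :
    ∃ ε, ∃ hε : |ε| = 1, c.approach y hy ≫ pathClass (segmentPath h) = c.halfMeridian k hε := by
  have h_off (l : ι) (hl : (a l).im ≠ (a k).im) :
      0 < ((a k).im - (a l).im) * ((y : ℂ).im - (a l).im) := by
    simpa [hk ▸ hl, hk] using hyx l
  rcases (hy k).lt_or_gt with h_lt | h_gt
  · exact ⟨-1, by simp, c.approach_comp_eq hy k _ (by linarith) h_off h⟩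
  · exact ⟨1, by simp, c.approach_comp_eq hy k _ (by linarith) h_off h⟩

theorem approach_comp_mem_closure {x y y' : ((Set.range a)ᶜ : Set ℂ)} (hy : y ∈ offRows a)
    (hy' : y' ∈ offRows a) {k : ι} (hk : (a k).im = (x : ℂ).im)
    (hkx : (c.east k : ℂ) ∈ cell x) {δ : Path y y'} (hδ : ∀ t, (δ t : ℂ) ∈ cell x) :
    c.approach y hy ≫ pathClass δ ≫ inv (c.approach y' hy') ∈
      Subgroup.closure (Set.range c.meridian) := by
  have hyx : (y : ℂ) ∈ cell x := by simpa only [δ.source] using hδ 0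
  have hyx' : (y' : ℂ) ∈ cell x := by simpa only [δ.target] using hδ 1
  have hC : Convex ℝ (cell x) := convex_sideCell _ _
  have hCS : cell x ⊆ (Set.range a)ᶜ := sideCell_subset_compl _ _
  have hS := (hC.segment_subset hyx hkx).trans hCS
  have hS' := (hC.segment_subset hyx' hkx).trans hCS
  obtain ⟨ε, hε, h⟩ := c.exists_approach_comp_eq_halfMeridian hy hyx hk hS
  obtain ⟨ε', hε', h'⟩ := c.exists_approach_comp_eq_halfMeridian hy' hyx' hk hS'
  have hδ_east : pathClass δ ≫ pathClass (segmentPath hS') = pathClass (segmentPath hS) := by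
    rw [← pathClass_trans]
    exact pathClass_eq_of_convex hC hCS
      (forall_trans_apply_mem (V := Subtype.val ⁻¹' cell x) hδ (segmentPath_mem hC hyx' hkx _))
      (segmentPath_mem hC hyx hkx _)
  convert c.halfMeridian_comp_inv_mem_closure k hε hε' using 1
  rw [← h, ← h', ← hδ_east]
  simp

theorem west_mem_sideCell {x y : ((Set.range a)ᶜ : Set ℂ)} (hyx : (y : ℂ) ∈ cell x) :
    (c.west (y : ℂ).im : ℂ) ∈ sideCell a (fun l => if (a l).im = (x : ℂ).im then -1 else 0)
      fun l => (x : ℂ).im - (a l).im := by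
  intro l
  have h := hyx l
  dsimp only [west] at h ⊢
  split_ifs at h ⊢ with hl
  · simpa [hl] using c.left_lt l
  · simpa using h

theorem cell_subset_sideCell {x : ((Set.range a)ᶜ : Set ℂ)}
    (hx : ∀ l, (a l).im = (x : ℂ).im → (x : ℂ).re ≤ (a l).re) :
    cell x ⊆ sideCell a (fun l => if (a l).im = (x : ℂ).im then -1 else 0)
      fun l => (x : ℂ).im - (a l).im := by
  intro z hz l
  have h := hz l
  dsimp only at h ⊢
  split_ifs at h ⊢ with hl
  · have h_prod : 0 < ((x : ℂ).re - (a l).re) * (z.re - (a l).re) := by simpa [hl] using h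
    have h_neg := (pos_iff_pos_of_mul_pos h_prod).not.1 (by linarith [hx l hl])
    have h_ne := right_ne_zero_of_mul h_prod.ne'
    simpa [hl, sub_eq_zero] using (not_lt.1 h_neg).lt_of_ne h_ne
  · simpa using h

theorem dense_offRows [Finite ι] : Dense (offRows a) := by
  have h_dense : Dense (Set.range fun l => (a l).im)ᶜ :=
    (Set.finite_range _).countable.dense_compl ℝ
  have h_open : IsOpenMap fun z : ((Set.range a)ᶜ : Set ℂ) => (z : ℂ).im :=
    Complex.isOpenMap_im.comp (Set.finite_range a).isClosed.isOpen_compl.isOpenMap_subtype_val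
  convert h_dense.preimage h_open
  ext z
  simp [offRows]

theorem closure_range_meridian [Finite ι] : Subgroup.closure (Set.range c.meridian) = ⊤ := by
  have : LocallyPathConnectedSpace ((Set.range a)ᶜ : Set ℂ) :=
    (Set.finite_range a).isClosed.isOpen_compl.locallyPathConnectedSpace
  refine subgroup_eq_top_of_forall_local dense_offRows c.approach _ fun x =>
    ⟨Subtype.val ⁻¹' cell x, (isOpen_sideCell _ _).preimage continuous_subtype_val,
      mem_cell_self x, fun y hy y' hy' δ hδ => ?_⟩
  by_cases h_left : ∃ l, (a l).im = (x : ℂ).im ∧ (a l).re < (x : ℂ).re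
  · obtain ⟨k, ⟨hk, hk_lt⟩, hk_max⟩ := Set.exists_max_image
      {l | (a l).im = (x : ℂ).im ∧ (a l).re < (x : ℂ).re} (fun l => (a l).re)
      (Set.toFinite _) h_left
    exact c.approach_comp_mem_closure hy hy' hk
      (c.east_mem_cell hk hk_lt fun l hl hlx => hk_max l ⟨hl, hlx⟩) hδ
  · push Not at h_left
    have hyx : (y : ℂ) ∈ cell x := by simpa only [Set.mem_preimage, δ.source] using hδ 0
    have hyx' : (y' : ℂ) ∈ cell x := by simpa only [Set.mem_preimage, δ.target] using hδ 1
    have h_one : (1 : FundamentalGroup _ (c.west 0)) ∈ Subgroup.closure (Set.range c.meridian) :=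
      one_mem _
    rw [← Category.assoc, c.approach_comp_path_eq hy hy' (c.west_mem_sideCell hyx)
      (c.west_mem_sideCell hyx') fun t => cell_subset_sideCell h_left (hδ t)]
    simpa using h_one

end RowCircles

end PuncturedPlane

section LinesComplement

open CategoryTheory

variable {ι : Type*}

/-- The points in which the lines `x.2 = α k * x.1 + β k` meet the vertical line over `c`. -/
def verticalTrace (α β : ι → ℝ) (c : ℂ) (k : ι) : ℂ :=
  α k * c + β k

/-- The complement in `ℂ²` of the lines `x.2 = α k * x.1 + β k`. -/
def linesCompl (α β : ι → ℝ) : Set (ℂ × ℂ) :=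
  {x | x.2 ∈ (Set.range (verticalTrace α β x.1))ᶜ}

/-- The points of `ℂ²` below all lines `x.2 = α k * x.1 + β k` with respect to the real part of the
second coordinate. -/
def belowLines (α β : ι → ℝ) : Set (ℂ × ℂ) :=
  {x | ∀ k, x.2.re < (verticalTrace α β x.1 k).re}

variable {α β : ι → ℝ}

theorem convex_belowLines : Convex ℝ (belowLines α β) := by
  intro x hx y hy r s hr hs hrs k
  obtain rfl : s = 1 - r := by linarith
  have h : 0 < r * _ + (1 - r) * _ :=
    convex_Ioi (0 : ℝ) (sub_pos.2 (hx k)) (sub_pos.2 (hy k)) hr hs hrs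
  rw [← sub_pos]
  convert h using 1
  simp [verticalTrace]
  ring

theorem belowLines_subset : belowLines α β ⊆ linesCompl α β := by
  rintro x hx ⟨k, hk⟩
  exact (hx k).ne (by rw [hk])

theorem isOpen_linesCompl [Finite ι] : IsOpen (linesCompl α β) := by
  have h : linesCompl α β = ⋂ k, {x | verticalTrace α β x.1 k ≠ x.2} := by
    ext
    simp [linesCompl]
  rw [h]
  refine isOpen_iInter_of_finite fun k => isOpen_ne_fun ?_ continuous_snd
  unfold verticalTrace
  fun_prop

/-- The inclusion of the punctured vertical line over `c`. -/
def verticalInclusion (α β : ι → ℝ) (c : ℂ) :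
    C(((Set.range (verticalTrace α β c))ᶜ : Set ℂ), linesCompl α β) :=
  ⟨fun z => ⟨(c, z), z.2⟩, by fun_prop⟩

theorem segment_subset_linesCompl {x y : ℂ × ℂ} (hx : x ∈ belowLines α β)
    (hy : y ∈ belowLines α β) : segment ℝ x y ⊆ linesCompl α β :=
  (convex_belowLines.segment_subset hx hy).trans belowLines_subset

/-- Conjugation of a loop in the vertical line over `c` by a straight path from `b`. -/
noncomputable def verticalLoop {b : linesCompl α β} (hb : (b : ℂ × ℂ) ∈ belowLines α β) {c : ℂ}
    {z : ((Set.range (verticalTrace α β c))ᶜ : Set ℂ)} (hz : (c, (z : ℂ)) ∈ belowLines α β)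
    (γ : Path z z) : FundamentalGroup (linesCompl α β) b :=
  pathClass (segmentPath (y := verticalInclusion α β c z) (segment_subset_linesCompl hb hz)) ≫
    pathClass (γ.map (verticalInclusion α β c).continuous) ≫
      inv (pathClass (segmentPath (y := verticalInclusion α β c z)
        (segment_subset_linesCompl hb hz)))

theorem verticalLoop_eq_of_comp_eq {b : linesCompl α β} (hb : (b : ℂ × ℂ) ∈ belowLines α β)
    {c c' : ℂ}
    {z : ((Set.range (verticalTrace α β c))ᶜ : Set ℂ)} (hz : (c, (z : ℂ)) ∈ belowLines α β)
    {z' : ((Set.range (verticalTrace α β c'))ᶜ : Set ℂ)} (hz' : (c', (z' : ℂ)) ∈ belowLines α β)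
    {γ : Path z z} {γ' : Path z' z'}
    {e : Path (verticalInclusion α β c z) (verticalInclusion α β c' z')}
    (he : ∀ s, (e s : ℂ × ℂ) ∈ belowLines α β)
    (h : pathClass (γ.map (verticalInclusion α β c).continuous) ≫ pathClass e =
      pathClass e ≫ pathClass (γ'.map (verticalInclusion α β c').continuous)) :
    verticalLoop hb hz γ = verticalLoop hb hz' γ' := by
  have h_seg : pathClass (segmentPath (y := verticalInclusion α β c z)
      (segment_subset_linesCompl hb hz)) ≫ pathClass e = pathClass (segmentPath
        (y := verticalInclusion α β c' z') (segment_subset_linesCompl hb hz')) := by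
    rw [← pathClass_trans]
    exact pathClass_eq_of_convex convex_belowLines belowLines_subset
      (forall_trans_apply_mem (V := Subtype.val ⁻¹' belowLines α β)
        (segmentPath_mem convex_belowLines hb hz _) he)
      (segmentPath_mem convex_belowLines hb hz' _)
  rw [← IsIso.eq_comp_inv] at h
  simp only [verticalLoop, ← h_seg, h]
  simp

theorem shear_mem_linesCompl {c d : ℂ} {μ : C(ℂ, ℝ)} (hμ_add : ∀ w, ∀ t : ℝ, μ (w + t * d) = μ w)
    (hμ : ∀ k, μ (verticalTrace α β c k) = α k) {w : ℂ}
    (hw : w ∈ (Set.range (verticalTrace α β c))ᶜ) (s : ℝ) :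
    (c + s * d, w + s * μ w * d) ∈ linesCompl α β := by
  rintro ⟨k, hk⟩
  simp only [verticalTrace] at hk
  have h_inv : w = verticalTrace α β c k + ((s * (α k - μ w) : ℝ) : ℂ) * d := by
    rw [verticalTrace]
    push_cast
    linear_combination -hk
  have h : μ w = α k := by rw [h_inv, hμ_add, hμ]
  exact hw ⟨k, by rw [h_inv, h]; simp⟩

-- The shears `w ↦ w + s * μ w * d` form an isotopy from the line over `c` to the line over `c + d`.
theorem exists_verticalLoop_eq_of_shear {b : linesCompl α β} (hb : (b : ℂ × ℂ) ∈ belowLines α β)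
    {c c' : ℂ} {μ : C(ℂ, ℝ)} (hμ_add : ∀ w, ∀ t : ℝ, μ (w + t * (c' - c)) = μ w)
    (hμ : ∀ k, μ (verticalTrace α β c k) = α k)
    {z : ((Set.range (verticalTrace α β c))ᶜ : Set ℂ)} (hz : (c, (z : ℂ)) ∈ belowLines α β)
    (hz_below : ∀ s : I, (c + s * (c' - c), (z : ℂ) + s * μ z * (c' - c)) ∈ belowLines α β)
    (γ : Path z z) :
    ∃ (z' : ((Set.range (verticalTrace α β c'))ᶜ : Set ℂ)) (hz' : (c', (z' : ℂ)) ∈ belowLines α β)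
      (γ' : Path z' z'), (z' : ℂ) = z + μ z * (c' - c) ∧
        verticalLoop hb hz γ = verticalLoop hb hz' γ' := by
  have h_shear (w : ((Set.range (verticalTrace α β c))ᶜ : Set ℂ)) :=
    shear_mem_linesCompl hμ_add hμ w.2
  have h_end (w : ((Set.range (verticalTrace α β c))ᶜ : Set ℂ)) :
      (w : ℂ) + μ w * (c' - c) ∈ (Set.range (verticalTrace α β c'))ᶜ := by
    simpa [linesCompl] using h_shear w 1
  let shear : C(((Set.range (verticalTrace α β c))ᶜ : Set ℂ),
    ((Set.range (verticalTrace α β c'))ᶜ : Set ℂ)) := ⟨fun w => ⟨_, h_end w⟩, by fun_prop⟩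
  have hz' : (c', (shear z : ℂ)) ∈ belowLines α β := by
    simpa [shear] using hz_below 1
  let e : Path (verticalInclusion α β c z) (verticalInclusion α β c' (shear z)) :=
    { toFun s := ⟨_, belowLines_subset (hz_below s)⟩
      continuous_toFun := by fun_prop
      source' := by ext <;> simp [verticalInclusion]
      target' := by ext <;> simp [verticalInclusion, shear] }
  have h_square : pathClass (γ.map (verticalInclusion α β c).continuous) ≫ pathClass e =
      pathClass e ≫
        pathClass ((γ.map shear.continuous).map (verticalInclusion α β c').continuous) := by
    refine pathClass_comp_eq_of_square ⟨fun q : I × I => ⟨_, h_shear (γ q.2) q.1⟩, by fun_prop⟩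
      (fun t => Subtype.ext ?_) (fun s => Subtype.ext ?_) (fun s => Subtype.ext ?_)
      fun t => Subtype.ext ?_
    · change (c, (γ t : ℂ)) = _
      simp
    · change (c + s * (c' - c), (z : ℂ) + s * μ z * (c' - c)) = _
      simp
    · change (c + s * (c' - c), (z : ℂ) + s * μ z * (c' - c)) = _
      simp
    · change (c', (γ t : ℂ) + μ (γ t) * (c' - c)) = _
      simp
  exact ⟨shear z, hz', γ.map shear.continuous, rfl,
    verticalLoop_eq_of_comp_eq hb hz hz' hz_below h_square⟩

theorem verticalLoop_mem_range {c : ℂ} {z₀ z : ((Set.range (verticalTrace α β c))ᶜ : Set ℂ)}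
    (hz₀ : (verticalInclusion α β c z₀ : ℂ × ℂ) ∈ belowLines α β)
    (hz : (c, (z : ℂ)) ∈ belowLines α β) (γ : Path z z) :
    verticalLoop hz₀ hz γ ∈ (FundamentalGroup.map (verticalInclusion α β c) z₀).range := by
  have h_seg : segment ℝ (z₀ : ℂ) z ⊆ (Set.range (verticalTrace α β c))ᶜ := fun w hw =>
    segment_subset_linesCompl hz₀ hz
      ((Prod.image_mk_segment_right (𝕜 := ℝ) c (z₀ : ℂ) z).subset (Set.mem_image_of_mem _ hw))
  have h_map : segmentPath (segment_subset_linesCompl hz₀ hz) =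
      (segmentPath h_seg).map (verticalInclusion α β c).continuous := by
    refine Path.ext (funext fun t => Subtype.ext ?_)
    change AffineMap.lineMap (c, (z₀ : ℂ)) (c, (z : ℂ)) (t : ℝ) =
      (c, AffineMap.lineMap (z₀ : ℂ) z (t : ℝ))
    simp [AffineMap.lineMap_apply]
  refine ⟨pathClass ((segmentPath h_seg).trans (γ.trans (segmentPath h_seg).symm)), ?_⟩
  simp only [verticalLoop, h_map, ← pathClass_symm, ← pathClass_trans]
  change pathClass (Path.map _ (verticalInclusion α β c).continuous) = _
  rw [Path.map_trans, Path.map_trans, Path.map_symm]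

theorem verticalLoop_mem_range_of_im_ne_zero [Finite ι] (hβ : Function.Injective β) {y₀ : ℝ}
    {z₀ : ((Set.range (verticalTrace α β (y₀ * Complex.I)))ᶜ : Set ℂ)}
    (hz₀ : (verticalInclusion α β (y₀ * Complex.I) z₀ : ℂ × ℂ) ∈ belowLines α β) {c : ℂ}
    (hc : c.im ≠ 0) {z : ((Set.range (verticalTrace α β c))ᶜ : Set ℂ)} (hz_im : (z : ℂ).im = 0)
    (hzβ : ∀ k, (z : ℂ).re < β k) (hz : (c, (z : ℂ)) ∈ belowLines α β) (γ : Path z z) :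
    verticalLoop hz₀ hz γ ∈
      (FundamentalGroup.map (verticalInclusion α β (y₀ * Complex.I)) z₀).range := by
  classical
  have := Fintype.ofFinite ι
  let slopeAt : C(ℂ, ℝ) := ⟨fun w => (Lagrange.interpolate Finset.univ β α).eval w.re, by fun_prop⟩
  have h_slopeAt (k : ι) : slopeAt (β k) = α k := by
    simpa [slopeAt] using Lagrange.eval_interpolate_at_node α hβ.injOn (Finset.mem_univ k)
  have hz_axis : ((c.im * Complex.I : ℂ), (z : ℂ)) ∈ belowLines α β := fun k => by
    simpa [verticalTrace] using hzβ k
  obtain ⟨z₁, hz₁, γ₁, hz₁_eq, h₁⟩ := exists_verticalLoop_eq_of_shear hz₀ (c := c)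
    (c' := c.im * Complex.I) (μ := ⟨fun w => w.im / c.im, by fun_prop⟩) (fun w t => by simp)
    (fun k => by simp [verticalTrace, hc]) hz
    (fun s => by
      convert convex_belowLines.lineMap_mem hz hz_axis s.2 using 1
      simp [AffineMap.lineMap_apply, hz_im]
      ring) γ
  obtain ⟨z₂, hz₂, γ₂, -, h₂⟩ := exists_verticalLoop_eq_of_shear hz₀ (c := c.im * Complex.I)
    (c' := y₀ * Complex.I) (μ := slopeAt) (fun w t => by simp [slopeAt])
    (fun k => by simpa [verticalTrace, slopeAt] using h_slopeAt k) hz₁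
    (fun s k => by simpa [verticalTrace, hz₁_eq, hz_im] using hzβ k) γ₁
  rw [h₁, h₂]
  exact verticalLoop_mem_range hz₀ hz₂ γ₂

/-- The second coordinate of a point of `linesCompl α β`. -/
def verticalCoord (x : linesCompl α β) :
    ((Set.range (verticalTrace α β (x : ℂ × ℂ).1))ᶜ : Set ℂ) :=
  ⟨(x : ℂ × ℂ).2, x.2⟩

theorem coe_verticalCoord (x : linesCompl α β) : (verticalCoord x : ℂ) = (x : ℂ × ℂ).2 :=
  rfl

section LowSection

variable [Fintype ι]

/-- A continuous section of the projection to the first coordinate that stays below all lines. -/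
noncomputable def lowSection (α β : ι → ℝ) (c : ℂ) : ℂ :=
  ((-1 - ∑ k, (|α k * c.re| + |β k|) : ℝ) : ℂ)

theorem lowSection_im (c : ℂ) : (lowSection α β c).im = 0 :=
  Complex.ofReal_im _

theorem lowSection_re_lt (c : ℂ) (k : ι) :
    (lowSection α β c).re < -(|α k * c.re| + |β k|) := by
  have h := Finset.single_le_sum (f := fun k => |α k * c.re| + |β k|) (fun _ _ => by positivity)
    (Finset.mem_univ k)
  rw [lowSection, Complex.ofReal_re]
  linarith

theorem lowSection_mem_belowLines (c : ℂ) : (c, lowSection α β c) ∈ belowLines α β := fun k => by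
  have h := lowSection_re_lt (α := α) (β := β) c k
  simp only [verticalTrace, Complex.add_re, Complex.re_ofReal_mul, Complex.ofReal_re]
  linarith [neg_abs_le (α k * c.re), neg_abs_le (β k)]

theorem continuous_lowSection : Continuous (lowSection α β) := by
  unfold lowSection
  fun_prop

/-- The value of `lowSection` as a point of the punctured vertical line. -/
noncomputable def lowPoint (α β : ι → ℝ) (c : ℂ) : ((Set.range (verticalTrace α β c))ᶜ : Set ℂ) :=
  ⟨lowSection α β c, belowLines_subset (lowSection_mem_belowLines c)⟩

theorem coe_lowPoint (c : ℂ) : (lowPoint α β c : ℂ) = lowSection α β c :=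
  rfl

theorem joined_lowPoint (x : linesCompl α β) :
    Joined (lowPoint α β (x : ℂ × ℂ).1) (verticalCoord x) := by
  have h := (Set.finite_range (verticalTrace α β (x : ℂ × ℂ).1)).countable
    |>.isPathConnected_compl_of_one_lt_rank (by simp [Complex.rank_real_complex])
  exact (isPathConnected_iff_pathConnectedSpace.1 h).joined _ _

-- A vertical path ending at `x` is carried along to the nearby points by a translation depending on
-- its parameter.
theorem exists_local_vertical_paths (x : linesCompl α β) :
    ∃ U, IsOpen U ∧ x ∈ U ∧ ∃ F : C(linesCompl α β × I, ℂ), ∀ y ∈ U,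
      F (y, 0) = lowSection α β (y : ℂ × ℂ).1 ∧ F (y, 1) = (y : ℂ × ℂ).2 ∧
        ∀ t, ((y : ℂ × ℂ).1, F (y, t)) ∈ linesCompl α β := by
  obtain ⟨v⟩ := joined_lowPoint x
  have h_low := continuous_lowSection (α := α) (β := β)
  let F : C(linesCompl α β × I, ℂ) :=
    ⟨fun q => v q.2 + (1 - (q.2 : ℝ)) *
      (lowSection α β (q.1 : ℂ × ℂ).1 - lowSection α β (x : ℂ × ℂ).1) +
        (q.2 : ℝ) * ((q.1 : ℂ × ℂ).2 - (x : ℂ × ℂ).2), by fun_prop⟩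
  have h_open : IsOpen {q : linesCompl α β × I | ((q.1 : ℂ × ℂ).1, F q) ∈ linesCompl α β} :=
    isOpen_linesCompl.preimage (by fun_prop)
  refine ⟨interior {y | ∀ t, ((y : ℂ × ℂ).1, F (y, t)) ∈ linesCompl α β}, isOpen_interior, ?_, F,
    fun y hy => ⟨?_, ?_, interior_subset hy⟩⟩
  · rw [mem_interior_iff_mem_nhds]
    have h_near : ∀ t ∈ (Set.univ : Set I), ∀ᶠ q in 𝓝 (x, t),
        ((q.1 : ℂ × ℂ).1, F q) ∈ linesCompl α β := fun t _ => by
      have h : ((x : ℂ × ℂ).1, (v t : ℂ)) ∈ linesCompl α β := (v t).2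
      exact h_open.mem_nhds (by simpa [F] using h)
    filter_upwards [isCompact_univ.eventually_forall_of_forall_eventually
      (P := fun (y : linesCompl α β) t => ((y : ℂ × ℂ).1, F (y, t)) ∈ linesCompl α β) h_near]
      with y hy t
    exact hy t (Set.mem_univ t)
  · simp [F, coe_lowPoint]
  · simp [F, coe_verticalCoord]

/-- A path in the vertical line through `x` from `lowPoint` to `x`. -/
noncomputable def verticalPath {x : linesCompl α β}
    (w : Path (lowPoint α β (x : ℂ × ℂ).1) (verticalCoord x)) :
    Path (verticalInclusion α β (x : ℂ × ℂ).1 (lowPoint α β (x : ℂ × ℂ).1)) x :=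
  w.map (verticalInclusion α β _).continuous

theorem verticalLoop_trans_symm {b : linesCompl α β} (hb : (b : ℂ × ℂ) ∈ belowLines α β)
    {x : linesCompl α β} (v w : Path (lowPoint α β (x : ℂ × ℂ).1) (verticalCoord x)) :
    verticalLoop hb (lowSection_mem_belowLines _) (v.trans w.symm) =
      pathClass (segmentPath (segment_subset_linesCompl hb (lowSection_mem_belowLines _))) ≫
        (pathClass (verticalPath v) ≫ inv (pathClass (verticalPath w))) ≫
          inv (pathClass (segmentPath (segment_subset_linesCompl hb
            (lowSection_mem_belowLines _)))) := by
  unfold verticalLoop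
  rw [Path.map_trans, ← Path.map_symm, pathClass_trans, pathClass_symm]
  rfl

/-- The class of a path from `b` to `x` that runs straight to `lowPoint` and then vertically. -/
noncomputable def standardPathClass {b : linesCompl α β} (hb : (b : ℂ × ℂ) ∈ belowLines α β)
    (x : linesCompl α β) : PathClass b x :=
  pathClass (segmentPath (y := verticalInclusion α β _ (lowPoint α β (x : ℂ × ℂ).1))
    (segment_subset_linesCompl hb (lowSection_mem_belowLines _))) ≫
    pathClass (verticalPath (joined_lowPoint x).somePath)

theorem standardPathClass_comp_eq {b : linesCompl α β} (hb : (b : ℂ × ℂ) ∈ belowLines α β)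
    {x y : linesCompl α β}
    (wx : Path (lowPoint α β (x : ℂ × ℂ).1) (verticalCoord x))
    (wy : Path (lowPoint α β (y : ℂ × ℂ).1) (verticalCoord y)) (δ : Path x y)
    (F : C(I × I, linesCompl α β)) (h_left : ∀ s, F (s, 0) = verticalInclusion α β _ (wx s))
    (h_right : ∀ s, F (s, 1) = verticalInclusion α β _ (wy s))
    (h_bottom : ∀ t, (F (0, t) : ℂ × ℂ) ∈ belowLines α β)
    (h_top : ∀ t, F (1, t) = δ t) :
    standardPathClass hb x ≫ pathClass δ ≫ inv (standardPathClass hb y) =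
      verticalLoop hb (lowSection_mem_belowLines _) (wy.trans (joined_lowPoint y).somePath.symm) *
        verticalLoop hb (lowSection_mem_belowLines _)
          ((joined_lowPoint x).somePath.trans wx.symm) := by
  let bottom : Path (verticalInclusion α β _ (lowPoint α β (x : ℂ × ℂ).1))
      (verticalInclusion α β _ (lowPoint α β (y : ℂ × ℂ).1)) :=
    { toFun t := F (0, t)
      continuous_toFun := by fun_prop
      source' := by rw [h_left, wx.source]
      target' := by rw [h_right, wy.source] }
  have h_δ : pathClass δ = inv (pathClass (verticalPath wx)) ≫
      pathClass bottom ≫ pathClass (verticalPath wy) := by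
    rw [IsIso.eq_inv_comp]
    exact (pathClass_comp_eq_of_square F (fun t => rfl) (fun s => (h_right s).symm)
      (fun s => (h_left s).symm) (fun t => (h_top t).symm)).symm
  have h_low : pathClass (segmentPath (y := verticalInclusion α β _ (lowPoint α β (x : ℂ × ℂ).1))
      (segment_subset_linesCompl hb (lowSection_mem_belowLines _))) ≫ pathClass bottom =
      pathClass (segmentPath (y := verticalInclusion α β _ (lowPoint α β (y : ℂ × ℂ).1))
        (segment_subset_linesCompl hb (lowSection_mem_belowLines _))) := by
    rw [← pathClass_trans]
    exact pathClass_eq_of_convex convex_belowLines belowLines_subset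
      (forall_trans_apply_mem (V := Subtype.val ⁻¹' belowLines α β)
        (segmentPath_mem convex_belowLines hb (lowSection_mem_belowLines _) _) h_bottom)
      (segmentPath_mem convex_belowLines hb (lowSection_mem_belowLines _) _)
  simp [standardPathClass, End.mul_def, verticalLoop_trans_symm, h_δ, ← h_low]

end LowSection

theorem dense_im_fst_ne_zero [Finite ι] :
    Dense {x : linesCompl α β | (x : ℂ × ℂ).1.im ≠ 0} :=
  (dense_compl_singleton (0 : ℝ)).preimage <| Complex.isOpenMap_im.comp <|
    isOpenMap_fst.comp isOpen_linesCompl.isOpenMap_subtype_val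

theorem fundamentalGroup_map_verticalInclusion_surjective [Finite ι] (hβ : Function.Injective β)
    {y₀ : ℝ}
    {z₀ : ((Set.range (verticalTrace α β (y₀ * Complex.I)))ᶜ : Set ℂ)}
    (hz₀ : (verticalInclusion α β (y₀ * Complex.I) z₀ : ℂ × ℂ) ∈ belowLines α β) :
    Function.Surjective (FundamentalGroup.map (verticalInclusion α β (y₀ * Complex.I)) z₀) := by
  have := Fintype.ofFinite ι
  have := isOpen_linesCompl (α := α) (β := β) |>.locallyPathConnectedSpace
  rw [← MonoidHom.range_eq_top]
  have h_mem {c : ℂ} (hc : c.im ≠ 0) (γ : Path (lowPoint α β c) (lowPoint α β c)) :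
      verticalLoop hz₀ (lowSection_mem_belowLines c) γ ∈
        (FundamentalGroup.map (verticalInclusion α β (y₀ * Complex.I)) z₀).range :=
    verticalLoop_mem_range_of_im_ne_zero hβ hz₀ hc (lowSection_im c) (fun k =>
      (lowSection_re_lt c k).trans_le (by linarith [neg_abs_le (β k), abs_nonneg (α k * c.re)]))
      (lowSection_mem_belowLines c) γ
  refine subgroup_eq_top_of_forall_local dense_im_fst_ne_zero
    (fun x _ => standardPathClass hz₀ x) _ fun x => ?_
  obtain ⟨U, hU, hxU, F, hF⟩ := exists_local_vertical_paths x
  refine ⟨U, hU, hxU, fun y hy y' hy' δ hδ => ?_⟩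
  let w {y : linesCompl α β} (hy : y ∈ U) : Path (lowPoint α β (y : ℂ × ℂ).1) (verticalCoord y) :=
    { toFun s := ⟨F (y, s), (hF y hy).2.2 s⟩
      continuous_toFun := by fun_prop
      source' := Subtype.ext (hF y hy).1
      target' := Subtype.ext (hF y hy).2.1 }
  have hyU : y ∈ U := by simpa using hδ 0
  have hyU' : y' ∈ U := by simpa using hδ 1
  rw [standardPathClass_comp_eq hz₀ (w hyU) (w hyU') δ
    ⟨fun q => ⟨((δ q.2 : ℂ × ℂ).1, F (δ q.2, q.1)), (hF _ (hδ q.2)).2.2 q.1⟩, by fun_prop⟩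
    (fun s => ?_) (fun s => ?_) (fun t => ?_) fun t => ?_]
  · exact mul_mem (h_mem hy' _) (h_mem hy _)
  · simp [w, verticalInclusion]
  · simp [w, verticalInclusion]
  · simpa [(hF _ (hδ t)).1] using lowSection_mem_belowLines _
  · simp [(hF _ (hδ t)).2.1]

end LinesComplement

section LinesComplementHomology

open CategoryTheory

variable {ι : Type*} {α β : ι → ℝ}

theorem fundamentalGroupMulEquivOfPath_apply {X : Type*} [TopologicalSpace X] {x y : X}
    (γ : Path x y) (g : FundamentalGroup X x) :
    FundamentalGroup.fundamentalGroupMulEquivOfPath γ g =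
      inv (pathClass γ) ≫ g ≫ pathClass γ := by
  rw [← pathClass_symm]
  rfl

/-- The point of the unit circle reached after the fraction `t` of a full turn. -/
noncomputable def turn (t : I) : ℂ :=
  Complex.exp (2 * Real.pi * Complex.I * (t : ℝ))

theorem turn_zero : turn 0 = 1 := by
  simp [turn]

theorem turn_one : turn 1 = 1 := by
  simp [turn]

theorem norm_turn (t : I) : ‖turn t‖ = 1 := by
  simp [turn, Complex.norm_exp]

@[fun_prop]
theorem continuous_turn : Continuous turn := by
  unfold turn
  fun_prop

/-- The equation of the line `l`, as a nowhere vanishing function on the complement. -/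
def lineForm (α β : ι → ℝ) (l : ι) : C(linesCompl α β, PuncturedPlane) :=
  ⟨fun x => ⟨(x : ℂ × ℂ).2 - (α l * (x : ℂ × ℂ).1 + β l),
    sub_ne_zero.2 fun h => x.2 ⟨l, h.symm⟩⟩, by fun_prop⟩

theorem coe_lineForm (l : ι) (x : linesCompl α β) :
    (lineForm α β l x : ℂ) = (x : ℂ × ℂ).2 - (α l * (x : ℂ × ℂ).1 + β l) :=
  rfl

/-- The sum of the winding numbers around all the lines. -/
noncomputable def totalWindingNumber [Fintype ι] (α β : ι → ℝ) (x : linesCompl α β) :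
    FundamentalGroup (linesCompl α β) x →* Multiplicative ℤ :=
  ∏ l, windingNumber (lineForm α β l) x

theorem toAdd_totalWindingNumber [Fintype ι] (x : linesCompl α β)
    (g : FundamentalGroup (linesCompl α β) x) :
    (totalWindingNumber α β x g).toAdd = ∑ l, (windingNumber (lineForm α β l) x g).toAdd := by
  rw [totalWindingNumber, MonoidHom.finsetProd_apply, toAdd_prod]

/-- Dimensions of a system of loops around the lines `x.2 = α k * x.1 + β k`: over the circle of
radius `height` about `0`, discs of radius `radius` about the intersection points of the lines with
a line through `0` parallel to one of them are disjoint for different slopes, and `right k`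
separates the line `k` from the next parallel line. -/
structure LoopDimensions (α β : ι → ℝ) where
  radius : ℝ
  height : ℝ
  right : ι → ℝ
  abs_lt_radius (k : ι) : |β k| < radius
  two_mul_radius_lt (k l : ι) : α k ≠ α l → 2 * radius < height * |α k - α l|
  lt_right (k : ι) : β k < right k
  right_le (k : ι) : right k ≤ radius
  right_lt (k l : ι) : α k = α l → β k < β l → right k < β l
  right_eq (k : ι) : (∀ l, α l = α k → l = k) → right k = radius

theorem nonempty_loopDimensions [Finite ι] (α β : ι → ℝ) : Nonempty (LoopDimensions α β) := by
  obtain ⟨radius, h_radius⟩ := (Set.finite_range fun k => |β k|).bddAbove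
  obtain ⟨height, h_height⟩ :=
    (Set.finite_range fun k : ι × ι => 2 * (radius + 1) / |α k.1 - α k.2|).bddAbove
  have h_lt (k : ι) : |β k| < radius + 1 :=
    (h_radius (Set.mem_range_self k)).trans_lt (lt_add_one _)
  have h_right (k : ι) : ∃ r, β k < r ∧ r ≤ radius + 1 ∧ (∀ l, α k = α l → β k < β l → r < β l) ∧
      ((∀ l, α l = α k → l = k) → r = radius + 1) := by
    have hk := abs_lt.1 (h_lt k)
    rcases Set.eq_empty_or_nonempty {l | α k = α l ∧ β k < β l} with h_empty | h_ne
    · exact ⟨radius + 1, hk.2, le_rfl,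
        fun l hα hβ => absurd ⟨hα, hβ⟩ (Set.eq_empty_iff_forall_notMem.1 h_empty l),
        fun _ => rfl⟩
    · obtain ⟨m, ⟨hα_m, hβ_m⟩, h_min⟩ := Set.exists_min_image _ β (Set.toFinite _) h_ne
      have hm := abs_lt.1 (h_lt m)
      refine ⟨(β k + β m) / 2, by linarith, by linarith, fun l hα hβ => ?_, fun h => ?_⟩
      · linarith [h_min l ⟨hα, hβ⟩]
      · exact absurd (congrArg β (h m hα_m.symm)) hβ_m.ne'
  choose right lt_right right_le right_lt right_eq using h_right
  refine ⟨⟨radius + 1, height + 1, right, h_lt, fun k l hkl => ?_, lt_right, right_le, right_lt,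
    right_eq⟩⟩
  rw [← div_lt_iff₀ (abs_pos.2 (sub_ne_zero.2 hkl))]
  exact (h_height ⟨(k, l), rfl⟩).trans_lt (lt_add_one _)

namespace LoopDimensions

variable (s : LoopDimensions α β)

theorem rotation_mem {u : ℂ} (hu : ‖u‖ = 1) (t : ℝ) :
    (u * (s.height * Complex.I), u * ⟨-s.radius, t⟩) ∈ linesCompl α β := by
  rintro ⟨l, hl⟩
  have h : u * (⟨-s.radius, t⟩ - α l * s.height * Complex.I) = β l := by
    simp only [verticalTrace] at hl
    linear_combination -hl
  have h_norm := congrArg norm h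
  rw [norm_mul, hu, one_mul, Complex.norm_real, Real.norm_eq_abs] at h_norm
  have h_re := Complex.abs_re_le_norm (⟨-s.radius, t⟩ - α l * s.height * Complex.I)
  have h_lt := s.abs_lt_radius l
  simp [h_norm] at h_re
  linarith [le_abs_self s.radius]

theorem radius_pos (k : ι) : 0 < s.radius :=
  (abs_nonneg _).trans_lt (s.abs_lt_radius k)

theorem norm_neg_radius_mul_le (k : ι) {v : ℂ} (hv : ‖v‖ = 1) :
    ‖(-s.radius : ℝ) * v‖ ≤ s.radius := by
  simp [hv, abs_of_pos (s.radius_pos k)]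

theorem neg_radius_mul_ne {v : ℂ} (hv : ‖v‖ = 1) (l : ι) : (-s.radius : ℝ) * v ≠ β l := by
  intro h
  have h_norm := congrArg norm h
  have := s.abs_lt_radius l
  simp [hv, abs_of_pos (s.radius_pos l)] at h_norm
  linarith

theorem near_mem (k : ι) {u ζ : ℂ} (hu : ‖u‖ = 1) (hζ : ‖ζ‖ ≤ s.radius)
    (h : ∀ l, α l = α k → ζ ≠ β l) :
    (u * (s.height * Complex.I), α k * (u * (s.height * Complex.I)) + ζ) ∈ linesCompl α β := by
  rintro ⟨l, hl⟩
  simp only [verticalTrace] at hl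
  rcases eq_or_ne (α l) (α k) with h_eq | h_ne
  · exact h l h_eq (by rw [h_eq] at hl; linear_combination -hl)
  have h_sub : ((α l - α k : ℝ) : ℂ) * (u * (s.height * Complex.I)) = ζ - β l := by
    push_cast
    linear_combination hl
  have h_norm := congrArg norm h_sub
  have h_le := norm_sub_le ζ (β l)
  simp only [norm_mul, hu, Complex.norm_real, Complex.norm_I, Real.norm_eq_abs] at h_norm h_le
  have := s.two_mul_radius_lt l k h_ne
  have := s.abs_lt_radius l
  nlinarith [le_abs_self s.height, abs_nonneg (α l - α k)]

theorem verticalTrace_re (k : ι) : (verticalTrace α β (s.height * Complex.I) k).re = β k := by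
  simp [verticalTrace]

theorem verticalTrace_im (k : ι) :
    (verticalTrace α β (s.height * Complex.I) k).im = α k * s.height := by
  simp [verticalTrace]

theorem two_mul_radius_lt_abs_im_sub {k l : ι} (h : α k ≠ α l) :
    2 * s.radius < |(verticalTrace α β (s.height * Complex.I) k).im -
      (verticalTrace α β (s.height * Complex.I) l).im| := by
  rw [s.verticalTrace_im, s.verticalTrace_im, ← sub_mul, abs_mul, mul_comm |_|]
  exact (s.two_mul_radius_lt k l h).trans_le
    (mul_le_mul_of_nonneg_right (le_abs_self _) (abs_nonneg _))

/-- The circles around the points in which the lines meet the vertical line over `height * I`. -/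
noncomputable def rowCircles : RowCircles (verticalTrace α β (s.height * Complex.I)) where
  left := -s.radius
  right := s.right
  left_lt k := by simpa only [verticalTrace_re] using (abs_lt.1 (s.abs_lt_radius k)).1
  lt_right k := by simpa only [verticalTrace_re] using s.lt_right k
  right_lt k l h_im h_re := by
    rw [verticalTrace_re, verticalTrace_re] at *
    refine s.right_lt k l (by_contra fun h => ?_) h_re
    have := s.two_mul_radius_lt_abs_im_sub h
    rw [h_im, sub_self, abs_zero] at this
    linarith [s.radius_pos k]
  diameter_lt k l h := by
    have := s.two_mul_radius_lt_abs_im_sub (k := k) (l := l) fun h_eq => h (by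
      rw [verticalTrace_im, verticalTrace_im, h_eq])
    linarith [s.radius_pos k, s.right_le k]

/-- The point at height `t` on the line carrying the leftmost points of the circles. -/
noncomputable def point (t : ℝ) : linesCompl α β :=
  verticalInclusion α β (s.height * Complex.I) (s.rowCircles.west t)

theorem coe_point (t : ℝ) : (s.point t : ℂ × ℂ) = ((s.height * Complex.I : ℂ), ⟨-s.radius, t⟩) :=
  rfl

theorem point_zero_mem_belowLines : (s.point 0 : ℂ × ℂ) ∈ belowLines α β := fun k => by
  simpa [coe_point, verticalTrace] using (abs_lt.1 (s.abs_lt_radius k)).1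

/-- The leftmost point of the circle of the line `k`. -/
noncomputable abbrev corner (k : ι) : linesCompl α β :=
  s.point (verticalTrace α β (s.height * Complex.I) k).im

theorem coe_corner (k : ι) : (s.corner k : ℂ × ℂ) =
    ((s.height * Complex.I : ℂ), α k * (s.height * Complex.I) + ((-s.radius : ℝ) : ℂ)) := by
  rw [corner, coe_point, verticalTrace_im]
  ext <;> apply Complex.ext <;> simp

/-- The orbit of `s.point t` under scalar multiplication by the unit circle. -/
noncomputable def rotation (t : ℝ) : Path (s.point t) (s.point t) where
  toFun τ := ⟨_, s.rotation_mem (norm_turn τ) t⟩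
  continuous_toFun := by fun_prop
  source' := by ext <;> simp [turn_zero, coe_point]
  target' := by ext <;> simp [turn_one, coe_point]

/-- The straight path from the base point to the circle of the line `k`. -/
noncomputable def spur (k : ι) : Path (s.point 0) (s.corner k) :=
  (segmentPath (s.rowCircles.segment_west_subset 0 _)).map
    (verticalInclusion α β (s.height * Complex.I)).continuous

theorem coe_spur (k : ι) (τ : I) : (s.spur k τ : ℂ × ℂ) =
    s.point (τ * (verticalTrace α β (s.height * Complex.I) k).im) := by
  refine Prod.ext rfl ?_
  change AffineMap.lineMap (⟨-s.radius, 0⟩ : ℂ) (⟨-s.radius, _⟩ : ℂ) (τ : ℝ) = (⟨-s.radius, _⟩ : ℂ)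
  apply Complex.ext <;> simp [AffineMap.lineMap_apply]

theorem rotation_comp_spur (k : ι) :
    pathClass (s.rotation 0) ≫ pathClass (s.spur k) =
      pathClass (s.spur k) ≫
        pathClass (s.rotation (verticalTrace α β (s.height * Complex.I) k).im) := by
  let Γ : C(I × I, linesCompl α β) :=
    ⟨fun q => ⟨_, s.rotation_mem (norm_turn q.2)
      (q.1 * (verticalTrace α β (s.height * Complex.I) k).im)⟩, by
      simp only [Complex.mk_eq_add_mul_I]
      fun_prop⟩
  refine pathClass_comp_eq_of_square Γ (fun t => ?_) (fun t => ?_) (fun t => ?_) fun t => ?_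
  · simp [Γ, rotation]
  · exact Subtype.ext ((s.coe_spur k t).trans (by simp [Γ, coe_point, turn_one]))
  · exact Subtype.ext ((s.coe_spur k t).trans (by simp [Γ, coe_point, turn_zero]))
  · simp [Γ, rotation]

/-- The loop of `s.corner k` on a translate of the line `k`, over the circle of radius
`height`. -/
noncomputable def parallel (k : ι) : Path (s.corner k) (s.corner k) where
  toFun τ := ⟨_, s.near_mem k (norm_turn τ) (s.norm_neg_radius_mul_le k norm_one)
    fun l _ => s.neg_radius_mul_ne norm_one l⟩
  continuous_toFun := by fun_prop
  source' := Subtype.ext (by simp [turn_zero, coe_corner])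
  target' := Subtype.ext (by simp [turn_one, coe_corner])

theorem commute_parallel {k : ι} {γ : Path (s.corner k) (s.corner k)} {ζ : I → ℂ}
    (hζ : Continuous ζ) (h_norm : ∀ t, ‖ζ t‖ ≤ s.radius)
    (hγ : ∀ t, (γ t : ℂ × ℂ) = (s.height * Complex.I, α k * (s.height * Complex.I) + ζ t)) :
    Commute (S := FundamentalGroup (linesCompl α β) (s.corner k)) (pathClass γ)
      (pathClass (s.parallel k)) := by
  have h_ne (t : I) (l : ι) (hl : α l = α k) : ζ t ≠ β l := fun h =>
    (γ t).2 ⟨l, by rw [hγ, verticalTrace, hl, h]⟩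
  have h_corner (t : I) (h : γ t = s.corner k) : ζ t = (-s.radius : ℝ) := by
    have := congrArg Prod.snd ((hγ t).symm.trans (h ▸ s.coe_corner k))
    exact add_left_cancel this
  let Γ : C(I × I, linesCompl α β) :=
    ⟨fun q => ⟨_, s.near_mem k (norm_turn q.1) (h_norm q.2) (h_ne q.2)⟩, by fun_prop⟩
  refine commute_pathClass_of_torus Γ (fun t => ⟨?_, ?_⟩) fun t => ⟨?_, ?_⟩
  · exact Subtype.ext ((hγ t).trans (by simp [Γ, turn_zero]))
  · exact Subtype.ext ((hγ t).trans (by simp [Γ, turn_one]))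
  · simp [Γ, parallel, h_corner 0 γ.source]
  · simp [Γ, parallel, h_corner 1 γ.target]

/-- The circle of radius `radius` about the point in which the line `k` would meet the vertical line
over `height * I` if it passed through `0`. -/
noncomputable def bigCircle (k : ι) : Path (s.corner k) (s.corner k) where
  toFun τ := ⟨(s.height * Complex.I, α k * (s.height * Complex.I) + (-s.radius : ℝ) * turn τ), by
    simpa using s.near_mem k norm_one (s.norm_neg_radius_mul_le k (norm_turn τ))
      fun l _ => s.neg_radius_mul_ne (norm_turn τ) l⟩
  continuous_toFun := by fun_prop
  source' := Subtype.ext (by simp [turn_zero, coe_corner])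
  target' := Subtype.ext (by simp [turn_one, coe_corner])

theorem commute_bigCircle_parallel (k : ι) :
    Commute (S := FundamentalGroup (linesCompl α β) (s.corner k)) (pathClass (s.bigCircle k))
      (pathClass (s.parallel k)) :=
  s.commute_parallel (by fun_prop) (fun t => s.norm_neg_radius_mul_le k (norm_turn t)) fun _ => rfl

theorem pathClass_rotation_corner (k : ι) :
    pathClass (s.rotation (verticalTrace α β (s.height * Complex.I) k).im) =
      pathClass (s.parallel k) ≫ pathClass (s.bigCircle k) := by
  let Γ : C(I × I, linesCompl α β) :=
    ⟨fun q => ⟨_, s.near_mem k (norm_turn q.2)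
      (s.norm_neg_radius_mul_le k (norm_turn (q.1 * q.2)))
      fun l _ => s.neg_radius_mul_ne (norm_turn (q.1 * q.2)) l⟩, by fun_prop⟩
  have h := pathClass_comp_eq_of_square Γ (bottom := s.parallel k) (right := s.bigCircle k)
    (left := Path.refl _) (top := s.rotation _) (fun t => ?_) (fun t => ?_) (fun t => ?_)
    fun t => ?_
  · rw [h, pathClass_refl, Category.id_comp]
  · simp [Γ, parallel, turn_zero]
  · simp [Γ, bigCircle, turn_one]
  · exact Subtype.ext ((s.coe_corner k).trans (by simp [Γ, turn_zero]))
  · refine Subtype.ext (Prod.ext (by simp [Γ, rotation]) ?_)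
    have h_corner := congrArg Prod.snd (s.coe_corner k)
    simp only [corner, coe_point] at h_corner
    simp only [Γ, rotation, Path.coe_mk_mk, ContinuousMap.coe_mk, one_mul]
    rw [h_corner]
    ring

theorem commute_rotation_parallel (k : ι) :
    Commute (S := FundamentalGroup (linesCompl α β) (s.corner k))
      (pathClass (s.rotation (verticalTrace α β (s.height * Complex.I) k).im))
      (pathClass (s.parallel k)) := by
  rw [pathClass_rotation_corner]
  exact (s.commute_bigCircle_parallel k).mul_left (.refl _)

/-- The circle around the point in which the line `k` meets the vertical line over `height * I`. -/
noncomputable def meridianCircle (k : ι) : Path (s.corner k) (s.corner k) :=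
  (s.rowCircles.circle k).map (verticalInclusion α β (s.height * Complex.I)).continuous

theorem coe_meridianCircle (k : ι) (t : I) : (s.meridianCircle k t : ℂ × ℂ) =
    (s.height * Complex.I, α k * (s.height * Complex.I) +
      (((s.right k - s.radius) / 2 : ℝ) - ((s.right k + s.radius) / 2 : ℝ) * turn t)) := by
  refine Prod.ext rfl ?_
  have h_turn : Complex.exp ((2 * Real.pi * t : ℝ) * Complex.I) = turn t := by
    rw [turn]
    congr 1
    push_cast
    ring
  change s.rowCircles.circlePoint k (2 * Real.pi * t) = _
  rw [RowCircles.circlePoint, verticalTrace_im, h_turn, Complex.mk_eq_add_mul_I]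
  simp only [rowCircles]
  push_cast
  ring

theorem commute_meridianCircle_parallel (k : ι) :
    Commute (S := FundamentalGroup (linesCompl α β) (s.corner k)) (pathClass (s.meridianCircle k))
      (pathClass (s.parallel k)) := by
  refine s.commute_parallel (by fun_prop) (fun t => ?_) (s.coe_meridianCircle k)
  have h_le := norm_sub_le (((s.right k - s.radius) / 2 : ℝ) : ℂ)
    (((s.right k + s.radius) / 2 : ℝ) * turn t)
  have h_left := (abs_lt.1 (s.abs_lt_radius k)).1.trans (s.lt_right k)
  have h_right := s.right_le k
  rw [norm_mul, norm_turn, mul_one, Complex.norm_real, Complex.norm_real, Real.norm_of_nonpos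
    (by linarith), Real.norm_of_nonneg (by linarith)] at h_le
  linarith

theorem commute_meridianCircle_rotation {k : ι} (hk : ∀ l, α l = α k → l = k) :
    Commute (S := FundamentalGroup (linesCompl α β) (s.corner k)) (pathClass (s.meridianCircle k))
      (pathClass (s.rotation (verticalTrace α β (s.height * Complex.I) k).im)) := by
  have h : s.meridianCircle k = s.bigCircle k := by
    refine Path.ext (funext fun t => Subtype.ext ?_)
    rw [coe_meridianCircle, s.right_eq k hk]
    simp [bigCircle]
  rw [h, pathClass_rotation_corner]
  exact .mul_right (.refl _) (s.commute_bigCircle_parallel k)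

/-- The homomorphism of fundamental groups induced by the inclusion of the vertical line over
`height * I`. -/
noncomputable def verticalMap :
    FundamentalGroup ((Set.range (verticalTrace α β (s.height * Complex.I)))ᶜ : Set ℂ)
      (s.rowCircles.west 0) →* FundamentalGroup (linesCompl α β) (s.point 0) :=
  FundamentalGroup.map (verticalInclusion α β (s.height * Complex.I)) (s.rowCircles.west 0)

theorem closure_range_meridian [Finite ι] (hβ : Function.Injective β) :
    Subgroup.closure (Set.range fun k => s.verticalMap (s.rowCircles.meridian k)) = ⊤ := by
  have h_surj : Function.Surjective s.verticalMap :=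
    fundamentalGroup_map_verticalInclusion_surjective hβ s.point_zero_mem_belowLines
  change Subgroup.closure (Set.range (s.verticalMap ∘ s.rowCircles.meridian)) = ⊤
  rw [Set.range_comp, ← MonoidHom.map_closure, RowCircles.closure_range_meridian,
    Subgroup.map_top_of_surjective _ h_surj]

theorem verticalMap_meridian (k : ι) : s.verticalMap (s.rowCircles.meridian k) =
    pathClass (s.spur k) ≫ pathClass (s.meridianCircle k) ≫ inv (pathClass (s.spur k)) := by
  rw [RowCircles.meridian, ← pathClass_symm, ← pathClass_symm, ← pathClass_trans, ← pathClass_trans,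
    ← pathClass_trans, ← pathClass_trans]
  change pathClass (Path.map _ _) = _
  rw [Path.map_trans, Path.map_trans]
  rfl

/-- Transport of the fundamental group along the path `s.spur k`. -/
noncomputable abbrev spurEquiv (k : ι) :
    FundamentalGroup (linesCompl α β) (s.point 0) ≃*
      FundamentalGroup (linesCompl α β) (s.corner k) :=
  FundamentalGroup.fundamentalGroupMulEquivOfPath (s.spur k)

theorem spurEquiv_meridian (k : ι) :
    s.spurEquiv k (s.verticalMap (s.rowCircles.meridian k)) = pathClass (s.meridianCircle k) := by
  simp [fundamentalGroupMulEquivOfPath_apply, verticalMap_meridian]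

theorem spurEquiv_rotation (k : ι) : s.spurEquiv k (pathClass (s.rotation 0)) =
    pathClass (s.rotation (verticalTrace α β (s.height * Complex.I) k).im) := by
  simp [fundamentalGroupMulEquivOfPath_apply, rotation_comp_spur]

theorem commute_spurEquiv_symm_parallel_meridian (k : ι) :
    Commute ((s.spurEquiv k).symm (pathClass (s.parallel k)))
      (s.verticalMap (s.rowCircles.meridian k)) := by
  rw [← (s.spurEquiv k).symm_apply_apply (s.verticalMap (s.rowCircles.meridian k)),
    spurEquiv_meridian]
  exact (s.commute_meridianCircle_parallel k).symm.map _

theorem commute_spurEquiv_symm_parallel_rotation (k : ι) :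
    Commute ((s.spurEquiv k).symm (pathClass (s.parallel k))) (pathClass (s.rotation 0)) := by
  have h : pathClass (s.rotation 0) = (s.spurEquiv k).symm (pathClass (s.rotation _)) := by
    rw [← spurEquiv_rotation, MulEquiv.symm_apply_apply]
  rw [h]
  exact (s.commute_rotation_parallel k).symm.map _

theorem commute_rotation_meridian {k : ι} (hk : ∀ l, α l = α k → l = k) :
    Commute (S := FundamentalGroup (linesCompl α β) (s.point 0)) (pathClass (s.rotation 0))
      (s.verticalMap (s.rowCircles.meridian k)) := by
  have h := (s.commute_meridianCircle_rotation hk).symm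
  rw [← spurEquiv_meridian, ← spurEquiv_rotation] at h
  exact h.of_map (s.spurEquiv k).injective

theorem windingNumber_rotation (l : ι) :
    (windingNumber (lineForm α β l) (s.point 0) (pathClass (s.rotation 0))).toAdd = 1 := by
  refine windingNumber_circle_of_norm_lt (lineForm α β l) (c := -β l)
    (ρ := ⟨-s.radius, 0⟩ - α l * (s.height * Complex.I)) (fun t => ?_) ?_
  · simp only [coe_lineForm, rotation, turn, Path.coe_mk_mk]
    ring
  · have h_re := Complex.abs_re_le_norm (⟨-s.radius, 0⟩ - α l * (s.height * Complex.I))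
    rw [norm_neg, Complex.norm_real]
    refine (s.abs_lt_radius l).trans_le (h_re.trans' ?_)
    simp [le_abs_self]

theorem norm_sub_mul_height (k l : ι) :
    ‖((α k - α l : ℝ) * (s.height * Complex.I) : ℂ)‖ = |α k - α l| * |s.height| := by
  simp only [norm_mul, Complex.norm_real, Complex.norm_I, mul_one, Real.norm_eq_abs]

theorem windingNumber_parallel (k l : ι) :
    (windingNumber (lineForm α β l) (s.corner k) (pathClass (s.parallel k))).toAdd =
      if α l = α k then 0 else 1 := by
  have h_circle (t : I) : (lineForm α β l (s.parallel k t) : ℂ) = (-s.radius - β l : ℝ) +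
      ((α k - α l : ℝ) * (s.height * Complex.I)) *
        Complex.exp (2 * Real.pi * Complex.I * (t : ℝ)) := by
    simp only [coe_lineForm, parallel, turn, Path.coe_mk_mk]
    push_cast
    ring
  have h_abs := abs_lt.1 (s.abs_lt_radius l)
  split_ifs with h
  · refine windingNumber_circle_of_lt_norm _ h_circle ?_
    rw [norm_sub_mul_height, h, sub_self, abs_zero, zero_mul, norm_pos_iff, Complex.ofReal_ne_zero]
    linarith
  · refine windingNumber_circle_of_norm_lt _ h_circle ?_
    rw [norm_sub_mul_height, Complex.norm_real, Real.norm_of_nonpos (by linarith)]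
    have := s.two_mul_radius_lt k l (Ne.symm h)
    nlinarith [le_abs_self s.height, abs_nonneg (α k - α l)]

theorem lineForm_meridianCircle (k l : ι) (t : I) :
    (lineForm α β l (s.meridianCircle k t) : ℂ) =
      ((α k - α l : ℝ) * (s.height * Complex.I) + ((s.right k - s.radius) / 2 - β l : ℝ)) +
        (-((s.right k + s.radius) / 2) : ℝ) * Complex.exp (2 * Real.pi * Complex.I * (t : ℝ)) := by
  simp only [coe_lineForm, coe_meridianCircle, turn]
  push_cast
  ring

theorem windingNumber_meridianCircle_of_le {k l : ι} (hα : α l = α k) (hβ : β l ≤ β k) :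
    (windingNumber (lineForm α β l) (s.corner k) (pathClass (s.meridianCircle k))).toAdd = 1 := by
  refine windingNumber_circle_of_norm_lt _ (s.lineForm_meridianCircle k l) ?_
  have h_left := (abs_lt.1 (s.abs_lt_radius l)).1
  have h_right := s.lt_right k
  rw [Complex.norm_real (-_), Real.norm_of_nonpos (by linarith), hα, sub_self, Complex.ofReal_zero,
    zero_mul, zero_add, Complex.norm_real, Real.norm_eq_abs, abs_lt]
  constructor <;> linarith

theorem windingNumber_meridianCircle_of_lt {k l : ι} (h : α l = α k → β k < β l) :
    (windingNumber (lineForm α β l) (s.corner k) (pathClass (s.meridianCircle k))).toAdd = 0 := by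
  refine windingNumber_circle_of_lt_norm _ (s.lineForm_meridianCircle k l) ?_
  have h_left := (abs_lt.1 (s.abs_lt_radius k)).1
  have h_right := s.lt_right k
  rw [Complex.norm_real, Real.norm_of_nonpos (by linarith)]
  by_cases hα : α l = α k
  · have := s.right_lt k l hα.symm (h hα)
    rw [hα, sub_self, Complex.ofReal_zero, zero_mul, zero_add, Complex.norm_real, Real.norm_eq_abs,
      lt_abs]
    right
    linarith
  · refine lt_of_lt_of_le ?_ (Complex.abs_im_le_norm _)
    have := s.two_mul_radius_lt k l (Ne.symm hα)
    have := s.right_le k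
    simp only [Complex.add_im, Complex.im_ofReal_mul, Complex.ofReal_im, Complex.I_im, mul_one,
      add_zero, abs_mul]
    nlinarith [le_abs_self s.height, abs_nonneg (α k - α l)]

theorem windingNumber_meridian (k l : ι) :
    windingNumber (lineForm α β l) (s.point 0) (s.verticalMap (s.rowCircles.meridian k)) =
      windingNumber (lineForm α β l) (s.corner k) (pathClass (s.meridianCircle k)) := by
  rw [← spurEquiv_meridian, windingNumber_mulEquivOfPath]

theorem linearIndependent_windingNumber_meridian [Finite ι] (hβ : Function.Injective β) :
    LinearIndependent ℤ fun k l => (windingNumber (lineForm α β l) (s.point 0)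
      (s.verticalMap (s.rowCircles.meridian k))).toAdd := by
  have := Fintype.ofFinite ι
  let := LinearOrder.lift' β hβ
  let M : Matrix ι ι ℤ := .of fun k l => (windingNumber (lineForm α β l) (s.point 0)
    (s.verticalMap (s.rowCircles.meridian k))).toAdd
  have h_triangular : M.IsLowerTriangular := fun k l hkl =>
    (congrArg _ (s.windingNumber_meridian k l)).trans
      (s.windingNumber_meridianCircle_of_lt fun _ => hkl)
  have h_diagonal (k : ι) : M k k = 1 :=
    (congrArg _ (s.windingNumber_meridian k k)).trans
      (s.windingNumber_meridianCircle_of_le rfl le_rfl)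
  refine M.linearIndependent_rows_of_det_ne_zero ?_
  rw [M.det_of_isLowerTriangular h_triangular]
  simp [h_diagonal]

theorem windingNumber_spurEquiv_symm_parallel (k l : ι) :
    (windingNumber (lineForm α β l) (s.point 0)
      ((s.spurEquiv k).symm (pathClass (s.parallel k)))).toAdd = if α l = α k then 0 else 1 := by
  rw [← windingNumber_parallel s k l, ← windingNumber_mulEquivOfPath _ (s.spur k),
    MulEquiv.apply_symm_apply]

theorem totalWindingNumber_rotation [Fintype ι] :
    (totalWindingNumber α β (s.point 0) (pathClass (s.rotation 0))).toAdd = Fintype.card ι := by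
  simp [toAdd_totalWindingNumber, windingNumber_rotation]

theorem totalWindingNumber_spurEquiv_symm_parallel [Fintype ι] (k : ι) :
    (totalWindingNumber α β (s.point 0)
      ((s.spurEquiv k).symm (pathClass (s.parallel k)))).toAdd =
        Fintype.card ι - (Finset.univ.filter fun l => α l = α k).card := by
  rw [toAdd_totalWindingNumber, Finset.sum_congr rfl fun l _ =>
    (s.windingNumber_spurEquiv_symm_parallel k l).trans (ite_not _ _ _).symm, Finset.sum_boole]
  refine eq_sub_of_add_eq' ?_
  exact_mod_cast Finset.card_filter_add_card_filter_not (s := Finset.univ) fun l => α l = α k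

end LoopDimensions

theorem exists_nonempty_abelianization_addEquiv [Fintype ι] (hβ : Function.Injective β)
    (h : ∀ k, (∀ l, α l = α k → l = k) ∨
      Nat.Coprime (1 + (Finset.univ.filter fun l => α l = α k).card) (Fintype.card ι + 1)) :
    ∃ x : linesCompl α β, Nonempty (Additive (Abelianization (degreeSubgroup
      (totalWindingNumber α β x) (Fintype.card ι + 1))) ≃+ (Fin (Fintype.card ι) → ℤ)) := by
  obtain ⟨s⟩ := nonempty_loopDimensions α β
  have hN : ((Fintype.card ι : ℤ) + 1) ≠ 0 := by positivity
  refine ⟨s.point 0, nonempty_abelianization_degreeSubgroup_addEquiv (s.closure_range_meridian hβ)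
    (s.linearIndependent_windingNumber_meridian hβ) _ hN
    (T := pathClass (s.rotation 0)) (by rw [s.totalWindingNumber_rotation]) (fun k => ?_) rfl⟩
  rcases h k with hk | hk
  · refine ⟨_, s.commute_rotation_meridian hk, .refl _, ?_⟩
    rw [s.totalWindingNumber_rotation]
    exact ⟨-1, 1, by ring⟩
  · refine ⟨_, s.commute_spurEquiv_symm_parallel_meridian k,
      s.commute_spurEquiv_symm_parallel_rotation k, ?_⟩
    rw [s.totalWindingNumber_spurEquiv_symm_parallel]
    obtain ⟨a, b, hab⟩ := Nat.isCoprime_iff_coprime.2 hk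
    push_cast at hab
    exact ⟨-a, a + b, by linear_combination hab⟩

end LinesComplementHomology

section ConnectednessOfLinesComplement

theorem joined_linesCompl {ι : Type*} [Countable ι] {α β : ι → ℝ} (x y : linesCompl α β) :
    Joined x y := by
  let gap (z : ℂ × ℂ) (l : ι) : ℂ := verticalTrace α β z.1 l - z.2
  have gap_ne_zero (z : linesCompl α β) (l : ι) : gap z l ≠ 0 :=
    sub_ne_zero.2 fun h => z.2 ⟨l, h⟩
  let line := AffineMap.lineMap (k := ℂ) (x : ℂ × ℂ) (y : ℂ × ℂ)
  have gap_line (l : ι) (τ : ℂ) : gap (line τ) l = (1 - τ) * gap x l + τ * gap y l := by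
    simp only [gap, line, verticalTrace, AffineMap.lineMap_apply_module', Prod.fst_add,
      Prod.snd_add, Prod.smul_fst, Prod.smul_snd, Prod.fst_sub, Prod.snd_sub, smul_eq_mul]
    ring
  have countable_bad : {τ | ∃ l, gap (line τ) l = 0}.Countable := by
    rw [Set.ofPred_exists]
    refine Set.countable_iUnion fun l => Set.Subsingleton.countable fun τ hτ τ' hτ' => ?_
    have h : (τ - τ') * gap x l = 0 := by
      linear_combination τ * ((gap_line l τ').symm.trans hτ') -
        τ' * ((gap_line l τ).symm.trans hτ)
    exact sub_eq_zero.1 ((mul_eq_zero.1 h).resolve_right (gap_ne_zero x l))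
  have line_mem {τ : ℂ} (hτ : τ ∈ {τ | ∃ l, gap (line τ) l = 0}ᶜ) :
      line τ ∈ linesCompl α β := fun ⟨l, hl⟩ => hτ ⟨l, sub_eq_zero.2 hl⟩
  obtain ⟨γ, hγ⟩ := (countable_bad.isPathConnected_compl_of_one_lt_rank
    (Complex.rank_real_complex ▸ Cardinal.one_lt_two)).joinedIn
    0 (fun ⟨l, hl⟩ => gap_ne_zero x l (by simpa [gap_line] using hl))
    1 (fun ⟨l, hl⟩ => gap_ne_zero y l (by simpa [gap_line] using hl))
  have hline : Continuous line := by
    simp only [line, AffineMap.coe_lineMap]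
    fun_prop
  exact ⟨⟨⟨fun t => ⟨line (γ t), line_mem (hγ t)⟩, by fun_prop⟩,
    Subtype.ext (by simp [line]), Subtype.ext (by simp [line])⟩⟩

end ConnectednessOfLinesComplement

section LinearForms

open Module

theorem exists_apply_ne_zero_of_linearIndependent_pair {K V : Type*} [Field K] [AddCommGroup V]
    [Module K V] {f g : Dual K V} (h : LinearIndependent K ![f, g]) :
    ∃ x ∈ LinearMap.ker f, g x ≠ 0 := by
  by_contra! hx
  have hg : g ∈ Submodule.span K (Set.range ![f]) :=
    mem_span_of_iInf_ker_le_ker ((iInf_le _ 0).trans hx)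
  rw [Matrix.range_cons, Matrix.range_empty, Set.union_empty,
    Submodule.mem_span_singleton] at hg
  obtain ⟨c, rfl⟩ := hg
  simpa using LinearIndependent.pair_iff.1 h c (-1) (by simp)

variable {K V : Type*} [Field K] [AddCommGroup V] [Module K V]

theorem exists_basis_extending (hV : finrank K V = 3) {f : Dual K V} {v w : V} (hv : f v ≠ 0)
    (hw : f w = 0) (hw' : w ≠ 0) :
    ∃ e : Basis (Fin 3) K V, e 0 = v ∧ f (e 1) = 0 ∧ e 2 = w := by
  have : FiniteDimensional K V := .of_finrank_pos (by omega)
  obtain ⟨u, hu, hu'⟩ : ∃ u ∈ LinearMap.ker f, u ∉ Submodule.span K {w} := by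
    by_contra! h
    have hker := Dual.finrank_ker_add_one_of_ne_zero (f := f) (fun h0 => hv (by simp [h0]))
    have := Submodule.finrank_mono (show LinearMap.ker f ≤ Submodule.span K {w} from h)
    rw [finrank_span_singleton hw'] at this
    omega
  have hind : LinearIndependent K ![w, u] := (LinearIndependent.pair_iff' hw').2 fun c hc =>
    hu' (Submodule.mem_span_singleton.2 ⟨c, hc⟩)
  have hspan : Submodule.span K (Set.range ![w, u]) ≤ LinearMap.ker f := by
    rw [Submodule.span_le, Set.range_subset_iff, Fin.forall_fin_two]
    exact ⟨hw, hu⟩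
  have hind' : LinearIndependent K ![v, u, w] := linearIndependent_finCons.2
    ⟨LinearIndependent.pair_symm_iff.1 hind, fun h => hv (hspan (by simpa [Set.pair_comm] using h))⟩
  exact ⟨basisOfLinearIndependentOfCardEqFinrank hind' (by simp [hV]), by simpa using hu⟩

theorem exists_ne_zero_forall_apply_ne_zero [Infinite K] {ι : Type*} [Finite ι]
    {p : Submodule K V} (hp : p ≠ ⊥) (f : ι → Dual K V) (h : ∀ i, ∃ x ∈ p, f i x ≠ 0) :
    ∃ x ∈ p, x ≠ 0 ∧ ∀ i, f i x ≠ 0 := by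
  rcases isEmpty_or_nonempty ι with _ | ⟨⟨i⟩⟩
  · obtain ⟨x, hx, hx'⟩ := p.ne_bot_iff.1 hp
    exact ⟨x, hx, hx', isEmptyElim⟩
  · obtain ⟨x, hx, hx'⟩ := Dual.exists_forall_mem_ne_zero_of_forall_exists p f h
    exact ⟨x, hx, fun h => hx' i (by rw [h, map_zero]), hx'⟩

theorem exists_basis_of_pairwise_linearIndependent [Infinite K] (hV : finrank K V = 3)
    {ι : Type*} [Finite ι] {f : ι → Dual K V}
    (hf : Pairwise fun i k => LinearIndependent K ![f i, f k]) {j : ι} (hj : f j ≠ 0) :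
    ∃ e : Basis (Fin 3) K V, f j (e 0) = 1 ∧ f j (e 1) = 0 ∧ f j (e 2) = 0 ∧
      (∀ k : {k // k ≠ j}, f k (e 2) ≠ 0) ∧
      Function.Injective fun k : {k // k ≠ j} => f k (e 0) / f k (e 2) := by
  have : FiniteDimensional K V := .of_finrank_pos (by omega)
  have hker : LinearMap.ker (f j) ≠ ⊥ := fun h => by
    have := Dual.finrank_ker_add_one_of_ne_zero hj
    rw [h, finrank_bot] at this
    omega
  obtain ⟨w, hwj, hw0, hw⟩ := exists_ne_zero_forall_apply_ne_zero hker
    (fun k : {k // k ≠ j} => f k)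
    fun k => exists_apply_ne_zero_of_linearIndependent_pair (hf k.2.symm)
  let g (p : {p : {k // k ≠ j} × {k // k ≠ j} // p.1 ≠ p.2}) : Dual K V :=
    f p.1.2 w • f p.1.1 - f p.1.1 w • f p.1.2
  have g_ne_zero p : g p ≠ 0 := fun h => hw p.1.2 (LinearIndependent.pair_iff.1
    (hf (Subtype.coe_injective.ne p.2)) _ (-f p.1.1 w) (by rw [← h, neg_smul, ← sub_eq_add_neg])).1
  obtain ⟨v, hv⟩ := Dual.exists_forall_ne_zero_of_forall_exists
    (fun i : Option _ => i.elim (f j) g) fun i => by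
      cases i with
      | none => exact DFunLike.ne_iff.1 hj
      | some p => exact DFunLike.ne_iff.1 (g_ne_zero p)
  have hvj : f j v ≠ 0 := hv none
  obtain ⟨e, he₀, he₁, he₂⟩ :=
    exists_basis_extending hV (v := (f j v)⁻¹ • v) (by simpa using hvj) hwj hw0
  refine ⟨e, by simp [he₀, hvj], he₁, he₂ ▸ hwj, fun k => he₂ ▸ hw k, fun k l hkl => ?_⟩
  by_contra hne
  refine hv (some ⟨(k, l), hne⟩) ?_
  simp only [he₀, he₂, map_smul, smul_eq_mul] at hkl
  rw [div_eq_div_iff (hw k) (hw l), mul_assoc, mul_assoc,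
    mul_right_inj' (inv_ne_zero hvj)] at hkl
  simp only [Option.elim_some, g, LinearMap.sub_apply, LinearMap.smul_apply, smul_eq_mul]
  linear_combination hkl

end LinearForms

section MilnorFiber

/-- The isomorphism of fundamental groups induced by a homeomorphism. -/
noncomputable def fundamentalGroupCongr {X Y : Type*} [TopologicalSpace X] [TopologicalSpace Y]
    (h : X ≃ₜ Y) (x : X) : FundamentalGroup X x ≃* FundamentalGroup Y (h x) :=
  (FundamentalGroupoidFunctor.equivOfHomotopyEquiv
    h.toHomotopyEquiv).fullyFaithfulFunctor.mulEquivEnd (FundamentalGroupoid.mk x)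

/-- Linear coordinates on `ℂ³` in which `ℓ j` is the first coordinate and every other `ℓ k` is a
multiple of the homogenization of a real line `y = slope k * x + intercept k`, with pairwise
distinct intercepts. The affine plane `ℓ j = 1` then carries the deconed arrangement. -/
structure DeconingChart {ι : Type*} (ℓ : ι → (Fin 3 → ℂ) → ℂ) (j : ι) where
  coord : (Fin 3 → ℂ) ≃ₗ[ℂ] (Fin 3 → ℂ)
  slope : {k // k ≠ j} → ℝ
  intercept : {k // k ≠ j} → ℝ
  scale : {k // k ≠ j} → ℝ
  coord_zero (z : Fin 3 → ℂ) : coord z 0 = ℓ j z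
  scale_ne_zero (k : {k // k ≠ j}) : scale k ≠ 0
  intercept_injective : Function.Injective intercept
  apply_eq (k : {k // k ≠ j}) (z : Fin 3 → ℂ) :
    ℓ k z = scale k * (coord z 2 - (slope k * coord z 1 + intercept k * coord z 0))

theorem exists_complex_basis_of_real (e : Module.Basis (Fin 3) ℝ (Fin 3 → ℝ)) :
    ∃ b : Module.Basis (Fin 3) ℂ (Fin 3 → ℂ), ∀ i k, b i k = e i k :=
  ⟨(e.baseChange ℂ).map (TensorProduct.piScalarRight ℝ ℂ ℂ (Fin 3)), fun i k => by
    simp⟩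

theorem nonempty_deconingChart {ι : Type*} [Finite ι] {a : ι → Fin 3 → ℝ}
    (ha : Pairwise fun i k => LinearIndependent ℝ ![a i, a k]) {j : ι} (hj : a j ≠ 0)
    {ℓ : ι → (Fin 3 → ℂ) → ℂ} (hℓ : ∀ i z, ℓ i z = ∑ k, (a i k : ℂ) * z k) :
    Nonempty (DeconingChart ℓ j) := by
  let f (i : ι) : Module.Dual ℝ (Fin 3 → ℝ) := dotProductEquiv ℝ (Fin 3) (a i)
  have hf : Pairwise fun i k => LinearIndependent ℝ ![f i, f k] := fun i k hik =>
    LinearIndependent.pair_iff.2 fun r s h => by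
    simp only [f, ← map_smul, ← map_add, LinearEquiv.map_eq_zero_iff] at h
    exact LinearIndependent.pair_iff.1 (ha hik) r s h
  obtain ⟨e, he₀, he₁, he₂, he, he'⟩ :=
    exists_basis_of_pairwise_linearIndependent (by simp) hf (j := j) (by simpa [f] using hj)
  obtain ⟨b, hb⟩ := exists_complex_basis_of_real e
  have ℓ_basis (i : ι) (k : Fin 3) : (fun m => (a i m : ℂ)) ⬝ᵥ b k = f i (e k) := by
    simp [hb, f, dotProduct]
  have ℓ_eq (i : ι) (z : Fin 3 → ℂ) : ℓ i z = ∑ k, b.equivFun z k * f i (e k) := by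
    calc ℓ i z = (fun m => (a i m : ℂ)) ⬝ᵥ ∑ k, b.equivFun z k • b k := by
          rw [b.sum_equivFun, hℓ, dotProduct]
      _ = ∑ k, b.equivFun z k * f i (e k) := by
          simp only [dotProduct_sum, dotProduct_smul, ℓ_basis, smul_eq_mul]
  exact ⟨{
    coord := b.equivFun
    slope k := -(f k (e 1) / f k (e 2))
    intercept k := -(f k (e 0) / f k (e 2))
    scale k := f k (e 2)
    coord_zero z := by simp [ℓ_eq, Fin.sum_univ_three, he₀, he₁, he₂]
    scale_ne_zero := he
    intercept_injective := neg_injective.comp he'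
    apply_eq k z := by
      have : (f k (e 2) : ℂ) ≠ 0 := Complex.ofReal_ne_zero.2 (he k)
      rw [ℓ_eq, Fin.sum_univ_three]
      push_cast
      field_simp
      ring }⟩

theorem card_ne_add_one {ι : Type*} [Fintype ι] [DecidableEq ι] (j : ι) :
    Fintype.card {k // k ≠ j} + 1 = Fintype.card ι := by
  rw [Fintype.card_eq_sum_ones, Fintype.card_eq_sum_ones, Fintype.sum_eq_add_sum_subtype_ne _ j,
    add_comm]

namespace DeconingChart

variable {ι : Type*} {ℓ : ι → (Fin 3 → ℂ) → ℂ} {j : ι} (t : DeconingChart ℓ j)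

/-- The point of `ℂ³` over the affine point `x` at height `ℓ j = s`. -/
def conePoint (s : ℂ) (x : ℂ × ℂ) : Fin 3 → ℂ :=
  t.coord.symm ![s, s * x.1, s * x.2]

theorem apply_conePoint_self (s : ℂ) (x : ℂ × ℂ) : ℓ j (t.conePoint s x) = s := by
  simp [← t.coord_zero, conePoint]

theorem apply_conePoint (k : {k // k ≠ j}) (s : ℂ) (x : ℂ × ℂ) :
    ℓ k (t.conePoint s x) = s * (t.scale k * (x.2 - verticalTrace t.slope t.intercept x.1 k)) := by
  simp only [t.apply_eq, conePoint, LinearEquiv.apply_symm_apply, verticalTrace,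
    Matrix.cons_val_zero, Matrix.cons_val_one, Matrix.cons_val]
  ring

/-- The projection from the origin to the affine plane `ℓ j = 1`. -/
noncomputable def decone (z : Fin 3 → ℂ) : ℂ × ℂ :=
  (t.coord z 1 / ℓ j z, t.coord z 2 / ℓ j z)

theorem decone_conePoint {s : ℂ} (hs : s ≠ 0) (x : ℂ × ℂ) : t.decone (t.conePoint s x) = x := by
  rw [decone, t.apply_conePoint_self]
  simp [conePoint, hs]

theorem conePoint_decone {z : Fin 3 → ℂ} (hz : ℓ j z ≠ 0) :
    t.conePoint (ℓ j z) (t.decone z) = z := by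
  rw [conePoint, LinearEquiv.symm_apply_eq]
  ext i
  fin_cases i <;> simp [decone, mul_div_cancel₀ _ hz, t.coord_zero]

variable [Fintype ι]

theorem milnorFiber_apply_ne_zero (z : {z | ∏ i, ℓ i z = 1}) : ℓ j z ≠ 0 := fun h =>
  zero_ne_one ((Finset.prod_eq_zero (Finset.mem_univ j) h).symm.trans z.2)

variable [DecidableEq ι]

/-- The dehomogenized product of the forms other than `ℓ j`. -/
noncomputable def deconedProduct (x : ℂ × ℂ) : ℂ :=
  ∏ k, (t.scale k * (x.2 - verticalTrace t.slope t.intercept x.1 k))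

theorem prod_conePoint (s : ℂ) (x : ℂ × ℂ) :
    ∏ i, ℓ i (t.conePoint s x) = s ^ Fintype.card ι * t.deconedProduct x := by
  simp only [Fintype.prod_eq_mul_prod_subtype_ne _ j, apply_conePoint_self, apply_conePoint,
    ← card_ne_add_one j, Finset.prod_mul_distrib, Finset.prod_const, Finset.card_univ,
    deconedProduct]
  ring

theorem natCard_zeros (k : {k // k ≠ j}) :
    Nat.card {i // ℓ i (t.coord.symm ![0, 1, t.slope k]) = 0} =
      1 + (Finset.univ.filter fun l => t.slope l = t.slope k).card := by
  classical
  rw [Nat.card_eq_fintype_card, Fintype.card_subtype, Finset.card_filter, Finset.card_filter,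
    Fintype.sum_eq_add_sum_subtype_ne _ j, if_pos (by simp [← t.coord_zero])]
  congr! 4 with l
  simp [t.apply_eq, t.scale_ne_zero, sub_eq_zero, @eq_comm _ (t.slope k)]

theorem mem_linesCompl {x : ℂ × ℂ} :
    x ∈ linesCompl t.slope t.intercept ↔ t.deconedProduct x ≠ 0 := by
  simp [linesCompl, deconedProduct, Finset.prod_ne_zero_iff, t.scale_ne_zero, sub_eq_zero,
    @eq_comm _ x.2]

/-- The dehomogenized product of the forms other than `ℓ j`, as a function on the complement of the
deconed arrangement. -/
noncomputable def deconedUnit : C(linesCompl t.slope t.intercept, PuncturedPlane) :=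
  ⟨fun x => ⟨t.deconedProduct x, t.mem_linesCompl.1 x.2⟩, by
    unfold deconedProduct verticalTrace
    fun_prop⟩

theorem windingNumber_deconedUnit (x : linesCompl t.slope t.intercept) :
    windingNumber t.deconedUnit x = totalWindingNumber t.slope t.intercept x :=
  windingNumber_const_mul_prod (c := ∏ k, (t.scale k : ℂ))
    (Finset.prod_ne_zero_iff.2 fun k _ => Complex.ofReal_ne_zero.2 (t.scale_ne_zero k)) fun _ =>
      Finset.prod_mul_distrib

theorem deconedProduct_decone (z : {z | ∏ i, ℓ i z = 1}) :
    t.deconedProduct (t.decone z) = (ℓ j z)⁻¹ ^ Fintype.card ι := by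
  have h := t.prod_conePoint (ℓ j z) (t.decone z)
  rw [t.conePoint_decone (milnorFiber_apply_ne_zero z), z.2] at h
  rw [inv_pow]
  exact eq_inv_of_mul_eq_one_right h.symm

/-- The Milnor fiber is the cyclic cover of the deconed complement. -/
noncomputable def milnorFiberHomeomorph :
    {z | ∏ i, ℓ i z = 1} ≃ₜ CyclicCover t.deconedUnit (Fintype.card ι) where
  toFun z := ⟨(⟨t.decone z, t.mem_linesCompl.2 <| by
      rw [t.deconedProduct_decone]
      exact pow_ne_zero _ (inv_ne_zero (milnorFiber_apply_ne_zero z))⟩,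
    ⟨(ℓ j z)⁻¹, inv_ne_zero (milnorFiber_apply_ne_zero z)⟩),
    Subtype.ext (t.deconedProduct_decone z)⟩
  invFun p := ⟨t.conePoint (p.1.2 : ℂ)⁻¹ p.1.1, by
    have h : t.deconedProduct p.1.1 = (p.1.2 : ℂ) ^ Fintype.card ι := congrArg Subtype.val p.2
    rw [Set.mem_ofPred_eq, prod_conePoint, h, ← mul_pow, inv_mul_cancel₀ p.1.2.2, one_pow]⟩
  left_inv z := Subtype.ext <| by
    simpa using t.conePoint_decone (milnorFiber_apply_ne_zero z)
  right_inv p := Subtype.ext <| Prod.ext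
    (Subtype.ext (t.decone_conePoint (inv_ne_zero p.1.2.2) _))
    (Subtype.ext (by simp [t.apply_conePoint_self]))
  continuous_toFun := by
    have hcoord (i : Fin 3) : Continuous fun z => t.coord z i :=
      (continuous_apply i).comp t.coord.toContinuousLinearEquiv.continuous
    have hℓ : Continuous (ℓ j) := by
      simpa only [t.coord_zero] using hcoord 0
    refine Continuous.subtype_mk (.prodMk (.subtype_mk (.prodMk ?_ ?_) _) (.subtype_mk ?_ _)) _
    · exact ((hcoord 1).comp continuous_subtype_val).div (hℓ.comp continuous_subtype_val)
        milnorFiber_apply_ne_zero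
    · exact ((hcoord 2).comp continuous_subtype_val).div (hℓ.comp continuous_subtype_val)
        milnorFiber_apply_ne_zero
    · exact (hℓ.comp continuous_subtype_val).inv₀ milnorFiber_apply_ne_zero
  continuous_invFun := by
    have hinv : Continuous fun p : CyclicCover t.deconedUnit (Fintype.card ι) => (p.1.2 : ℂ)⁻¹ :=
      Continuous.inv₀ (by fun_prop) fun p => p.1.2.2
    refine Continuous.subtype_mk (t.coord.symm.toContinuousLinearEquiv.continuous.comp ?_) _
    fun_prop

theorem slope_unique_or_coprime (hj : ∀ v, v ≠ 0 → ℓ j v = 0 →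
      Nat.card {i // ℓ i v = 0} = 2 ∨ Nat.Coprime (Nat.card {i // ℓ i v = 0}) (Fintype.card ι))
    (k : {k // k ≠ j}) :
    (∀ l, t.slope l = t.slope k → l = k) ∨
      Nat.Coprime (1 + (Finset.univ.filter fun l => t.slope l = t.slope k).card)
        (Fintype.card {k // k ≠ j} + 1) := by
  have hv : t.coord.symm ![0, 1, t.slope k] ≠ 0 :=
    (LinearEquiv.map_ne_zero_iff _).2 fun h => one_ne_zero (congrFun h 1)
  rw [← t.natCard_zeros, card_ne_add_one]
  refine (hj _ hv (by simp [← t.coord_zero])).imp_left fun h l hl => ?_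
  rw [t.natCard_zeros] at h
  have h_card : (Finset.univ.filter fun l => t.slope l = t.slope k).card ≤ 1 := by omega
  exact Finset.card_le_one.1 h_card l (by simp [hl]) k (by simp)

/-- The fundamental group of the Milnor fiber as a subgroup of that of the deconed complement. -/
noncomputable def fundamentalGroupMilnorFiberEquiv [Nonempty ι] (z : {z | ∏ i, ℓ i z = 1})
    (x : linesCompl t.slope t.intercept) :
    FundamentalGroup {z | ∏ i, ℓ i z = 1} z ≃*
      degreeSubgroup (totalWindingNumber t.slope t.intercept x) (Fintype.card ι) :=
  (fundamentalGroupCongr t.milnorFiberHomeomorph z).trans <|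
  (fundamentalGroupCyclicCoverEquiv t.deconedUnit Fintype.card_ne_zero _).trans <|
  (degreeSubgroupEquivOfPath _ (joined_linesCompl _ x).somePath _).trans <|
  .subgroupCongr (by rw [t.windingNumber_deconedUnit])

end DeconingChart

theorem nonempty_abelianization_milnorFiber_addEquiv {ι : Type*} [Fintype ι]
    {ℓ : ι → (Fin 3 → ℂ) → ℂ} {j : ι} (t : DeconingChart ℓ j) (hj : ∀ v, v ≠ 0 → ℓ j v = 0 →
      Nat.card {i // ℓ i v = 0} = 2 ∨ Nat.Coprime (Nat.card {i // ℓ i v = 0}) (Fintype.card ι))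
    (z : {z | ∏ i, ℓ i z = 1}) :
    Nonempty (Additive (Abelianization (FundamentalGroup _ z)) ≃+
      (Fin (Fintype.card ι - 1) → ℤ)) := by
  classical
  have : Nonempty ι := ⟨j⟩
  obtain ⟨x, ⟨e⟩⟩ := exists_nonempty_abelianization_addEquiv t.intercept_injective
    (t.slope_unique_or_coprime hj)
  have hcard := card_ne_add_one j
  rw [← hcard, Nat.add_sub_cancel]
  rw [← Nat.cast_add_one, hcard] at e
  exact ⟨(t.fundamentalGroupMilnorFiberEquiv z x).abelianizationCongr.toAdditive.trans e⟩

end MilnorFiber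

/-- If some line of a complexified-real central arrangement of `n` planes
in `ℂ³` only contains multiple points `v` with `m_v = 2` or `gcd(m_v, n) = 1`, then the
first homology of the Milnor fiber is free abelian of rank `n − 1`. -/
theorem milnor_fiber_homology_free_of_line_with_good_points
    (n : ℕ) (hn : 1 ≤ n)
    (a : Fin n → Fin 3 → ℝ)
    (ha : ∀ i, a i ≠ 0)
    (hind : ∀ i j : Fin n, i ≠ j → LinearIndependent ℝ ![a i, a j])
    (ℓ : Fin n → (Fin 3 → ℂ) → ℂ)
    (hℓ : ∀ i z, ℓ i z = ∑ k, (a i k : ℂ) * z k)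
    (m : (Fin 3 → ℂ) → ℕ)
    (hm : ∀ v, m v = Nat.card {i : Fin n // ℓ i v = 0})
    (F : Set (Fin 3 → ℂ)) (hF : F = {z | ∏ i, ℓ i z = 1})
    (z₀ : F)
    (j : Fin n)
    (hj : ∀ v : Fin 3 → ℂ, v ≠ 0 → ℓ j v = 0 → m v = 2 ∨ Nat.gcd (m v) n = 1) :
    Nonempty (Additive (Abelianization (FundamentalGroup F z₀)) ≃+ (Fin (n - 1) → ℤ)) := by
  subst hF
  obtain ⟨chart⟩ := nonempty_deconingChart hind (ha j) hℓ
  have hj' (v : Fin 3 → ℂ) (hv : v ≠ 0) (hvj : ℓ j v = 0) : Nat.card {i // ℓ i v = 0} = 2 ∨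
      Nat.Coprime (Nat.card {i // ℓ i v = 0}) (Fintype.card (Fin n)) := by
    rw [← hm, Fintype.card_fin]
    exact hj v hv hvj
  have hfree := nonempty_abelianization_milnorFiber_addEquiv chart hj' z₀
  rwa [Fintype.card_fin] at hfree
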